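/- arXiv:1801.08775 — 10 statements merged into one kernel-verified Lean document; each statement's English description precedes it below -/
import Mathlib

section
/- Every expansive homeomorphism f : M → M of a compact metric space (M, ρ) admits a compatible metric d (i.e. a metric inducing the same topology as ρ) which is self-similar for f: there exist constants ξ > 0 and λ > 1 such that whenever d(p,q) ≤ ξ one has max{d(f(p),f(q)), d(f⁻¹(p),f⁻¹(q))} = λ·d(p,q). -/
open Filter Topology

lemma aux_frink {M : Type*} (r : M → M → NNReal) (h0 : ∀ x, r x x = 0)
    (hs : ∀ x y, r x y = r y x)
    (h4 : ∀ x y z w, r x w ≤ 2 * max (r x y) (max (r y z) (r z w))) :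
    ∃ D : M → M → ℝ, (∀ x, D x x = 0) ∧ (∀ x y, D x y = D y x) ∧
      (∀ x y z, D x z ≤ D x y + D y z) ∧ (∀ x y, 0 ≤ D x y) ∧
      (∀ x y, D x y ≤ r x y) ∧ (∀ x y, (r x y : ℝ) ≤ 2 * D x y) := by
  let _ : PseudoMetricSpace M := PseudoMetricSpace.ofPreNNDist r h0 hs
  refine ⟨fun x y => dist x y, dist_self, dist_comm, dist_triangle, fun _ _ => dist_nonneg, ?_, ?_⟩
  · exact PseudoMetricSpace.dist_ofPreNNDist_le r h0 hs
  · exact PseudoMetricSpace.le_two_mul_dist_ofPreNNDist r h0 hs h4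

lemma aux_inducing {X Y : Type*} [t : TopologicalSpace X] [CompactSpace X] [MetricSpace Y] (e : X → Y)
    (he : Function.Injective e)
    (h : ∀ p, ∀ ε > (0 : ℝ), ∀ᶠ q in 𝓝 p, dist (e q) (e p) < ε) :
    t = TopologicalSpace.induced e inferInstance := by
  have hcont : Continuous e :=
    continuous_iff_continuousAt.2 fun p => Metric.tendsto_nhds.2 (h p)
  exact (hcont.isClosedEmbedding he).isInducing.eq_induced

lemma aux_metric {M : Type*} [t : TopologicalSpace M] [CompactSpace M] (S : M → M → ℝ)
    (hS0 : ∀ x, S x x = 0) (hSs : ∀ x y, S x y = S y x) (hSt : ∀ x y z, S x z ≤ S x y + S y z)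
    (hSe : ∀ x y, S x y = 0 → x = y)
    (h : ∀ p, ∀ ε > (0 : ℝ), ∀ᶠ q in 𝓝 p, S q p < ε) :
    ∃ m' : MetricSpace M, m'.toUniformSpace.toTopologicalSpace = t ∧
      ∀ x y, m'.dist x y = S x y := by
  let m' : MetricSpace M :=
    { dist := S
      dist_self := hS0
      dist_comm := hSs
      dist_triangle := hSt
      eq_of_dist_eq_zero := fun {x y} h => hSe x y h }
  refine ⟨m', ?_, fun _ _ => rfl⟩
  have := @aux_inducing M M t _ m' id Function.injective_id h
  exact (this.trans (@induced_id M m'.toUniformSpace.toTopologicalSpace)).symm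

lemma aux_cont {M : Type*} [TopologicalSpace M]
    (f : Equiv.Perm M) (hf : Continuous f) (hf' : Continuous f.symm) (n : ℤ) :
    Continuous (f ^ n : Equiv.Perm M) := by
  have key : ∀ (g : Equiv.Perm M), Continuous g → ∀ k : ℕ, Continuous (g ^ k : Equiv.Perm M) := by
    intro g hg k
    rw [← Equiv.Perm.iterate_eq_pow]
    exact hg.iterate k
  cases n with
  | ofNat k => simpa using key f hf k
  | negSucc k =>
    rw [zpow_negSucc, ← inv_pow]
    exact key f⁻¹ hf' _

lemma aux_unif {M : Type*} [MetricSpace M] [CompactSpace M]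
    (f : Equiv.Perm M) (hf : Continuous f) (hf' : Continuous f.symm)
    (c : ℝ) (hc : 0 < c)
    (hexp : ∀ x y : M, x ≠ y → ∃ n : ℤ, c < dist ((f ^ n) x) ((f ^ n) y)) :
    ∃ m : ℕ, 1 ≤ m ∧ ∀ x y : M,
      (∀ i : ℤ, i.natAbs < m → dist ((f ^ i) x) ((f ^ i) y) ≤ c) → dist x y ≤ c / 3 := by
  have hK : IsCompact {p : M × M | c / 3 ≤ dist p.1 p.2} :=
    (isClosed_le continuous_const (by fun_prop)).isCompact
  obtain ⟨t, ht⟩ := hK.elim_finite_subcover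
    (fun i : ℤ => {p : M × M | c < dist ((f ^ i) p.1) ((f ^ i) p.2)})
    (fun i => by
      have := aux_cont f hf hf' i
      exact isOpen_lt continuous_const
        ((this.comp continuous_fst).dist (this.comp continuous_snd)))
    (by
      rintro ⟨x, y⟩ hxy
      have hne : x ≠ y := by
        rintro rfl
        simp at hxy
        linarith
      obtain ⟨n, hn⟩ := hexp x y hne
      exact Set.mem_iUnion.2 ⟨n, hn⟩)
  refine ⟨t.sup Int.natAbs + 1, by omega, fun x y h => ?_⟩
  by_contra! hlt
  have := ht (show (x, y) ∈ _ from hlt.le)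
  simp only [Set.mem_iUnion] at this
  obtain ⟨i, hi, hib⟩ := this
  have h1 : i.natAbs ≤ t.sup Int.natAbs := Finset.le_sup (f := Int.natAbs) hi
  exact absurd (h i (by omega)) (not_le.2 hib)

/-- every expansive homeomorphism of a compact metric space admits a
compatible self-similar metric. -/
theorem stmt_0 {M : Type*} [m : MetricSpace M] [CompactSpace M]
    (f : Equiv.Perm M) (hf : Continuous f) (hf' : Continuous f.symm)
    (c : ℝ) (hc : 0 < c)
    (hexp : ∀ x y : M, x ≠ y → ∃ n : ℤ, c < dist ((f ^ n) x) ((f ^ n) y)) :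
    ∃ m' : MetricSpace M,
      m'.toUniformSpace.toTopologicalSpace = m.toUniformSpace.toTopologicalSpace ∧
      ∃ ξ > (0 : ℝ), ∃ lam > (1 : ℝ), ∀ p q : M,
        m'.dist p q ≤ ξ →
        max (m'.dist (f p) (f q)) (m'.dist (f.symm p) (f.symm q)) = lam * m'.dist p q := by
  classical
  obtain ⟨k, hk1, hk⟩ := aux_unif f hf hf' c hc hexp
  have hmul : ∀ (i j : ℤ) (x : M), (f ^ i) ((f ^ j) x) = (f ^ (i + j)) x := by
    intro i j x
    rw [zpow_add, Equiv.Perm.mul_apply]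
  -- the first separation time
  obtain ⟨N, hN1, hN2, hNs⟩ : ∃ N : M → M → ℕ,
      (∀ x y (i : ℤ), c < dist ((f ^ i) x) ((f ^ i) y) → N x y ≤ i.natAbs) ∧
      (∀ x y, x ≠ y → ∃ i : ℤ, i.natAbs = N x y ∧ c < dist ((f ^ i) x) ((f ^ i) y)) ∧
      (∀ x y, N x y = N y x) := by
    refine ⟨fun x y => sInf {n | ∃ i : ℤ, i.natAbs = n ∧ c < dist ((f ^ i) x) ((f ^ i) y)},
      fun x y i hi => Nat.sInf_le ⟨i, rfl, hi⟩, fun x y hxy => ?_, fun x y => ?_⟩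
    · obtain ⟨i, hi⟩ := hexp x y hxy
      exact Nat.sInf_mem
        (s := {n | ∃ i : ℤ, i.natAbs = n ∧ c < dist ((f ^ i) x) ((f ^ i) y)}) ⟨_, i, rfl, hi⟩
    · simp only [dist_comm]
  -- shift
  have hNshift : ∀ x y (i : ℤ), x ≠ y → N x y ≤ N ((f ^ i) x) ((f ^ i) y) + i.natAbs := by
    intro x y i hxy
    obtain ⟨j, hj, hj'⟩ := hN2 ((f ^ i) x) ((f ^ i) y) (fun h => hxy ((f ^ i).injective h))
    rw [hmul, hmul] at hj'
    have := hN1 _ _ _ hj'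
    omega
  -- the scale
  obtain ⟨μ, hμ0, hμ1, hμk⟩ : ∃ μ : NNReal, 0 < μ ∧ μ < 1 ∧ μ ^ (2 * k) = 1 / 2 := by
    refine ⟨(1 / 2 : NNReal) ^ (1 / ((2 * k : ℕ) : ℝ)), ?_, ?_, ?_⟩
    · exact NNReal.rpow_pos (by norm_num)
    · apply NNReal.rpow_lt_one (by norm_num)
      positivity
    · rw [one_div ((2 * k : ℕ) : ℝ)]
      exact NNReal.rpow_inv_natCast_pow _ (by omega)
  have hsmall : ∀ s x y, (∀ i : ℤ, i.natAbs < s + k → dist ((f ^ i) x) ((f ^ i) y) ≤ c) →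
      ∀ i : ℤ, i.natAbs ≤ s → dist ((f ^ i) x) ((f ^ i) y) ≤ c / 3 := by
    intro s x y h i hi
    apply hk
    intro j hj
    rw [hmul, hmul]
    apply h
    omega
  let r : M → M → NNReal := fun x y => if x = y then 0 else μ ^ (2 * N x y)
  have hr_ne : ∀ x y, x ≠ y → r x y = μ ^ (2 * N x y) := fun x y h => if_neg h
  have hr_small : ∀ s x y, r x y < μ ^ (2 * s) →
      ∀ i : ℤ, i.natAbs ≤ s → dist ((f ^ i) x) ((f ^ i) y) ≤ c := by
    intro s x y h i hi
    by_contra! hlt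
    have hxy : x ≠ y := by
      rintro rfl
      simp at hlt
      linarith
    have h1 := hN1 _ _ _ hlt
    rw [hr_ne _ _ hxy] at h
    exact absurd h (not_lt.2 (pow_le_pow_of_le_one zero_le hμ1.le (by omega)))
  obtain ⟨D, hD0, hDs, hDt, hDn, hDr, hrD⟩ := aux_frink r (fun x => if_pos rfl)
    (fun x y => by simp only [r, hNs x y, eq_comm]) (by
      intro x y z w
      by_cases hxw : x = w
      · simp [r, hxw]
      by_contra! hlt
      rw [hr_ne _ _ hxw] at hlt
      obtain ⟨j, hj, hj'⟩ := hN2 x w hxw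
      set n := N x w with hn
      have hmax : max (r x y) (max (r y z) (r z w)) < μ ^ (2 * (n + k)) := by
        rw [mul_add, pow_add, hμk]
        rw [mul_one_div, lt_div_iff₀ (by norm_num), mul_comm]
        exact hlt
      rw [max_lt_iff, max_lt_iff] at hmax
      obtain ⟨h1, h2, h3⟩ := hmax
      have e1 := hsmall n x y (fun i hi => hr_small _ _ _ h1 i (by omega)) j hj.le
      have e2 := hsmall n y z (fun i hi => hr_small _ _ _ h2 i (by omega)) j hj.le
      have e3 := hsmall n z w (fun i hi => hr_small _ _ _ h3 i (by omega)) j hj.le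
      have := dist_triangle4 ((f ^ j) x) ((f ^ j) y) ((f ^ j) z) ((f ^ j) w)
      linarith)
  -- real versions
  obtain ⟨u, hu⟩ : ∃ u : ℝ, u = (μ : ℝ) := ⟨_, rfl⟩
  have hu0 : 0 < u := by rw [hu]; exact_mod_cast hμ0
  have hu1 : u < 1 := by rw [hu]; exact_mod_cast hμ1
  have huk : u ^ (2 * k) = 1 / 2 := by
    rw [hu]
    have := congrArg (fun z : NNReal => (z : ℝ)) hμk
    simpa using this
  have hDr' : ∀ x y, x ≠ y → D x y ≤ u ^ (2 * N x y) := by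
    intro x y h
    have := hDr x y
    rw [hr_ne _ _ h] at this
    rw [hu]; exact_mod_cast this
  have hrD' : ∀ x y, x ≠ y → u ^ (2 * N x y) ≤ 2 * D x y := by
    intro x y h
    have := hrD x y
    rw [hr_ne _ _ h] at this
    rw [hu]; exact_mod_cast this
  have hD1 : ∀ x y, D x y ≤ 1 := by
    intro x y
    by_cases h : x = y
    · rw [h, hD0]; norm_num
    · exact (hDr' x y h).trans (pow_le_one₀ hu0.le hu1.le)
  clear_value r
  let T : M → M → ℤ → ℝ := fun x y n => u ^ n.natAbs * D ((f ^ n) x) ((f ^ n) y)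
  have hT1 : ∀ x y n, T x y n ≤ 1 := fun x y n =>
    mul_le_one₀ (pow_le_one₀ hu0.le hu1.le) (hDn _ _) (hD1 _ _)
  have hTb : ∀ x y, BddAbove (Set.range (T x y)) := by
    intro x y
    refine ⟨1, ?_⟩
    rintro _ ⟨n, rfl⟩
    exact hT1 x y n
  let S : M → M → ℝ := fun x y => ⨆ n : ℤ, T x y n
  have hTS : ∀ x y n, T x y n ≤ S x y := fun x y n => le_ciSup (hTb x y) n
  have hSle : ∀ x y B, (∀ n, T x y n ≤ B) → S x y ≤ B := fun x y B h => ciSup_le h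
  have hDS : ∀ x y, D x y ≤ S x y := by
    intro x y
    have := hTS x y 0
    simpa [T] using this
  have hS0 : ∀ x, S x x = 0 := by
    intro x
    simp [S, T, hD0]
  have hSs : ∀ x y, S x y = S y x := by
    intro x y
    simp only [S, T]
    congr 1
    ext n
    rw [hDs]
  have hSt : ∀ x y z, S x z ≤ S x y + S y z := by
    intro x y z
    apply hSle
    intro n
    have h1 := hTS x y n
    have h2 := hTS y z n
    have h3 : T x z n ≤ T x y n + T y z n := by
      simp only [T]
      rw [← mul_add]
      exact mul_le_mul_of_nonneg_left (hDt _ _ _) (by positivity)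
    linarith
  have hSe : ∀ x y, S x y = 0 → x = y := by
    intro x y h
    by_contra hne
    have h1 := hDS x y
    have h2 := hrD' x y hne
    have h3 : 0 < u ^ (2 * N x y) := by positivity
    linarith
  have hSN : ∀ x y, x ≠ y → S x y ≤ u ^ (N x y) := by
    intro x y hxy
    apply hSle
    intro n
    have hne : (f ^ n) x ≠ (f ^ n) y := fun h => hxy ((f ^ n).injective h)
    have h1 := hNshift x y n hxy
    calc T x y n ≤ u ^ n.natAbs * u ^ (2 * N ((f ^ n) x) ((f ^ n) y)) :=
          mul_le_mul_of_nonneg_left (hDr' _ _ hne) (by positivity)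
      _ = u ^ (n.natAbs + 2 * N ((f ^ n) x) ((f ^ n) y)) := (pow_add _ _ _).symm
      _ ≤ u ^ (N x y) := pow_le_pow_of_le_one hu0.le hu1.le (by omega)
  clear_value S
  obtain ⟨m', hm't, hm'⟩ := aux_metric S hS0 hSs hSt hSe (by
    intro p ε hε
    obtain ⟨s, hs⟩ := exists_pow_lt_of_lt_one hε hu1
    have hev : ∀ᶠ q in 𝓝 p, ∀ i ∈ Finset.Icc (-(s : ℤ)) s, dist ((f ^ i) q) ((f ^ i) p) < c := by
      rw [Finset.eventually_all]
      intro i _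
      exact Metric.tendsto_nhds.1 ((aux_cont f hf hf' i).tendsto p) c hc
    filter_upwards [hev] with q hq
    by_cases hqp : q = p
    · rw [hqp, hS0]; exact hε
    refine (hSN q p hqp).trans_lt (lt_of_le_of_lt ?_ hs)
    apply pow_le_pow_of_le_one hu0.le hu1.le
    by_contra! hlt
    obtain ⟨j, hj, hj'⟩ := hN2 q p hqp
    have := hq j (by rw [Finset.mem_Icc]; omega)
    linarith)
  refine ⟨m', hm't, 1 / 8, by norm_num, u⁻¹, (one_lt_inv₀ hu0).2 hu1, ?_⟩
  · intro p q hpq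
    simp only [hm'] at hpq ⊢
    by_cases hne : p = q
    · subst hne
      simp [hS0]
    have hf1 : ∀ (n : ℤ) x, (f ^ n) (f x) = (f ^ (n + 1)) x := fun n x => by
      simpa using hmul n 1 x
    have hf2 : ∀ (n : ℤ) x, (f ^ n) (f.symm x) = (f ^ (n - 1)) x := fun n x => by
      have := hmul n (-1) x
      rw [zpow_neg_one] at this
      exact this
    have hup : ∀ a b : ℤ, b.natAbs ≤ a.natAbs + 1 →
        u ^ a.natAbs * D ((f ^ b) p) ((f ^ b) q) ≤ u⁻¹ * S p q := by
      intro a b hab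
      rw [le_inv_mul_iff₀ hu0, ← mul_assoc, ← pow_succ']
      exact (mul_le_mul_of_nonneg_right (pow_le_pow_of_le_one hu0.le hu1.le hab)
        (hDn _ _)).trans (hTS p q b)
    apply le_antisymm
    · apply max_le
      · apply hSle
        intro n
        simp only [T, hf1]
        exact hup _ _ (by omega)
      · apply hSle
        intro n
        simp only [T, hf2]
        exact hup _ _ (by omega)
    · rw [inv_mul_le_iff₀ hu0]
      have hmain : ∀ n : ℤ, n ≠ 0 →
          T p q n ≤ u * max (S (f p) (f q)) (S (f.symm p) (f.symm q)) := by
        intro n hn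
        rcases lt_or_gt_of_ne hn with h | h
        · have h1 := hTS (f.symm p) (f.symm q) (n + 1)
          simp only [T, hf2] at h1 ⊢
          have e : n.natAbs = (n + 1).natAbs + 1 := by omega
          rw [e, pow_succ', mul_assoc]
          apply mul_le_mul_of_nonneg_left _ hu0.le
          rw [add_sub_cancel_right] at h1
          exact h1.trans (le_max_right _ _)
        · have h1 := hTS (f p) (f q) (n - 1)
          simp only [T, hf1] at h1 ⊢
          have e : n.natAbs = (n - 1).natAbs + 1 := by omega
          rw [e, pow_succ', mul_assoc]
          apply mul_le_mul_of_nonneg_left _ hu0.le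
          rw [sub_add_cancel] at h1
          exact h1.trans (le_max_left _ _)
      apply hSle
      intro n
      by_cases hn : n ≠ 0
      · exact hmain n hn
      push Not at hn
      subst hn
      have hT0 : T p q 0 = D p q := by simp [T]
      rw [hT0]
      have h4k : u ^ (2 * (2 * k)) = 1 / 4 := by
        rw [mul_comm, pow_mul, huk]; norm_num
      have hNk : 2 * k ≤ N p q := by
        by_contra! hlt
        have h1 := hrD' p q hne
        have h2 := hDS p q
        have h3 : u ^ (2 * (2 * k)) < u ^ (2 * N p q) :=
          pow_lt_pow_right_of_lt_one₀ hu0 hu1 (by omega)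
        linarith
      obtain ⟨j, hj, hj'⟩ := hN2 p q hne
      obtain ⟨i, hi, hij⟩ : ∃ i : ℤ, i.natAbs = 2 * k ∧ (j - i).natAbs + 2 * k = N p q := by
        rcases le_total 0 j with h | h
        · exact ⟨2 * k, by omega, by omega⟩
        · exact ⟨-(2 * k), by omega, by omega⟩
      refine le_trans ?_ (hmain i (by omega))
      have hne' : (f ^ i) p ≠ (f ^ i) q := fun h => hne ((f ^ i).injective h)
      have hNi : N ((f ^ i) p) ((f ^ i) q) ≤ (j - i).natAbs := by
        apply hN1
        rw [hmul, hmul, sub_add_cancel]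
        exact hj'
      have h1 := hrD' _ _ hne'
      have h2 : u ^ (2 * (j - i).natAbs) ≤ u ^ (2 * N ((f ^ i) p) ((f ^ i) q)) :=
        pow_le_pow_of_le_one hu0.le hu1.le (by omega)
      have h3 := hDr' p q hne
      rw [← hij, mul_add, pow_add, h4k] at h3
      simp only [T, hi, huk]
      linarith
end

section
/- Let f be a homeomorphism of a compact metric space (M,d) and let d be self-similar for f with expanding factor λ > 1 and constant ξ > 0. If λ·d(x,y) ≠ d(f⁻¹(x), f⁻¹(y)), then d(fᵏ(x), fᵏ(y)) = λᵏ·d(x,y) for every integer k ≥ 0 such that λ^{k−1}·d(x,y) ≤ ξ. -/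
open Filter Topology

theorem stmt_3 {M : Type*} [MetricSpace M] [CompactSpace M]
    (f : Equiv.Perm M) (hf : Continuous f) (hf' : Continuous f.symm)
    (ξ lam : ℝ) (hξ : 0 < ξ) (hlam : 1 < lam)
    (hss : ∀ p q : M, dist p q ≤ ξ →
      max (dist (f p) (f q)) (dist (f.symm p) (f.symm q)) = lam * dist p q)
    (x y : M) (hxy : lam * dist x y ≠ dist (f.symm x) (f.symm y)) :
    ∀ k : ℕ, lam ^ ((k : ℤ) - 1) * dist x y ≤ ξ →
      dist ((f ^ k) x) ((f ^ k) y) = lam ^ k * dist x y := by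
  have hne : x ≠ y := by
    rintro rfl
    simp at hxy
  have hd : 0 < dist x y := dist_pos.mpr hne
  have key : ∀ k : ℕ, lam ^ k * dist x y ≤ ξ →
      dist ((f ^ k) x) ((f ^ k) y) = lam ^ k * dist x y ∧
      dist ((f ^ (k + 1)) x) ((f ^ (k + 1)) y) = lam ^ (k + 1) * dist x y := by
    intro k
    induction k with
    | zero =>
      intro h
      have h0 := hss x y (by simpa using h)
      refine ⟨by simp, ?_⟩
      rcases max_choice (dist (f x) (f y)) (dist (f.symm x) (f.symm y)) with h1 | h1
      · rw [h1] at h0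
        simpa using h0
      · rw [h1] at h0
        exact absurd h0.symm hxy
    | succ k ih =>
      intro h
      have hpos : 0 < lam ^ k * dist x y := by positivity
      have e1 : lam ^ (k + 1) * dist x y = lam * (lam ^ k * dist x y) := by ring
      have e2 : lam ^ (k + 1 + 1) * dist x y = lam * (lam ^ (k + 1) * dist x y) := by ring
      have hlt : lam ^ k * dist x y < lam ^ (k + 1) * dist x y := by
        rw [e1]; nlinarith
      have hlt2 : lam ^ (k + 1) * dist x y < lam * (lam ^ (k + 1) * dist x y) := by
        nlinarith
      obtain ⟨ha, hb⟩ := ih (hlt.le.trans h)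
      refine ⟨hb, ?_⟩
      have h0 := hss ((f ^ (k + 1)) x) ((f ^ (k + 1)) y) (by rw [hb]; exact h)
      have hs : ∀ z, f.symm ((f ^ (k + 1)) z) = (f ^ k) z := by
        intro z
        rw [pow_succ', Equiv.Perm.mul_apply, Equiv.symm_apply_apply]
      rw [hs, hs, ha, hb] at h0
      rw [pow_succ' f (k + 1), Equiv.Perm.mul_apply, Equiv.Perm.mul_apply, e2]
      rcases max_choice (dist (f ((f ^ (k + 1)) x)) (f ((f ^ (k + 1)) y)))
        (lam ^ k * dist x y) with h1 | h1
      · rw [h1] at h0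
        exact h0
      · rw [h1] at h0
        linarith
  intro k hk
  cases k with
  | zero => simp
  | succ k =>
    refine (key k ?_).2
    have e : ((k + 1 : ℕ) : ℤ) - 1 = (k : ℤ) := by push_cast; ring
    rwa [e, zpow_natCast] at hk
end

section
/- Let f be an expansive homeomorphism of a compact metric space (M,d) with expansivity constant ξ, where d is self-similar for f with expanding factor λ > 1 and constant ξ. Then for all ε > 0 there is δ > 0 such that if (x,y,z) is a dynamical triangle and d(x,y) < δ, then max{d(x,z), d(y,z)} < ε. -/
open Filter Topology

theorem stmt_5 {M : Type*} [MetricSpace M] [CompactSpace M]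
    (f : Equiv.Perm M) (hf : Continuous f) (hf' : Continuous f.symm)
    (ξ lam : ℝ) (hξ : 0 < ξ) (hlam : 1 < lam)
    (hexp : ∀ x y : M, x ≠ y → ∃ n : ℤ, ξ < dist ((f ^ n) x) ((f ^ n) y))
    (hss : ∀ p q : M, dist p q ≤ ξ →
      max (dist (f p) (f q)) (dist (f.symm p) (f.symm q)) = lam * dist p q) :
    ∀ ε > (0 : ℝ), ∃ δ > (0 : ℝ), ∀ x y z : M,
      (∀ n : ℕ, dist ((f.symm ^ n) x) ((f.symm ^ n) z) ≤ ξ / (2 * lam)) →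
      (∀ n : ℕ, dist ((f ^ n) y) ((f ^ n) z) ≤ ξ / (2 * lam)) →
      dist x y < δ → max (dist x z) (dist y z) < ε := by
  intro ε hε
  have hle : ξ / (2 * lam) ≤ ξ := by
    rw [div_le_iff₀ (by linarith)]
    nlinarith
  have c1 : ∀ n : ℕ, Continuous ⇑(f ^ n) := by
    intro n
    rw [Equiv.Perm.coe_pow]
    exact hf.iterate n
  have c2 : ∀ n : ℕ, Continuous ⇑(f.symm ^ n) := by
    intro n
    rw [Equiv.Perm.coe_pow]
    exact hf'.iterate n
  let K : Set (M × M × M) := {p |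
    (∀ n : ℕ, dist ((f.symm ^ n) p.1) ((f.symm ^ n) p.2.2) ≤ ξ / (2 * lam)) ∧
    (∀ n : ℕ, dist ((f ^ n) p.2.1) ((f ^ n) p.2.2) ≤ ξ / (2 * lam)) ∧
    ε ≤ max (dist p.1 p.2.2) (dist p.2.1 p.2.2)}
  have hK : IsClosed K := by
    refine IsClosed.and ?_ (IsClosed.and ?_ ?_)
    · simp only [Set.setOf_forall]
      refine isClosed_iInter fun n => isClosed_le ?_ continuous_const
      have := c2 n
      exact (this.comp continuous_fst).dist (this.comp (continuous_snd.comp continuous_snd))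
    · simp only [Set.setOf_forall]
      refine isClosed_iInter fun n => isClosed_le ?_ continuous_const
      have := c1 n
      exact (this.comp (continuous_fst.comp continuous_snd)).dist
        (this.comp (continuous_snd.comp continuous_snd))
    · exact isClosed_le continuous_const (by fun_prop)
  rcases K.eq_empty_or_nonempty with hE | hN
  · refine ⟨1, one_pos, fun x y z h1 h2 _ => ?_⟩
    by_contra hc
    have : (x, y, z) ∈ K := ⟨h1, h2, not_lt.mp hc⟩
    rw [hE] at this
    exact this
  · obtain ⟨⟨a, b, c⟩, hm, hmin⟩ := hK.isCompact.exists_isMinOn hN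
      (f := fun p : M × M × M => dist p.1 p.2.1) (by fun_prop)
    refine ⟨dist a b, ?_, fun x y z h1 h2 h3 => ?_⟩
    · refine dist_pos.mpr ?_
      rintro rfl
      obtain ⟨h1, h2, h3⟩ := hm
      dsimp only at h1 h2 h3
      have hac : a ≠ c := by
        rintro rfl
        simp at h3
        linarith
      obtain ⟨n, hn⟩ := hexp a c hac
      rcases Int.eq_nat_or_neg n with ⟨m, rfl | rfl⟩
      · rw [zpow_natCast] at hn
        linarith [h2 m]
      · rw [zpow_neg, zpow_natCast, ← inv_pow] at hn
        have := h1 m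
        change dist ((f⁻¹ ^ m) a) ((f⁻¹ ^ m) c) ≤ _ at this
        linarith
    · by_contra hc
      have hk : (x, y, z) ∈ K := ⟨h1, h2, not_lt.mp hc⟩
      have := isMinOn_iff.mp hmin _ hk
      dsimp only at this
      linarith
end

section
/- Let f be an expansive homeomorphism of a compact metric space (M,d) with expansivity constant ξ, where d is self-similar for f with expanding factor λ > 1 and constant ξ. Then for all ε > 0 there is δ > 0 such that for any critical triangle (x,y,z) with d(x,y) < δ, setting a = d(x,z) and b = d(z,y), one has 1/λ² − ε ≤ a/b ≤ 1 + ε. -/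
open Filter Topology

section aux
variable {M : Type*} [MetricSpace M] (g : Equiv.Perm M) (ξ lam : ℝ)

theorem aux_expand (hlam : 1 < lam)
    (hss : ∀ p q : M, dist p q ≤ ξ →
      max (dist (g p) (g q)) (dist (g.symm p) (g.symm q)) = lam * dist p q)
    (p q : M) (h1 : dist (g p) (g q) = lam * dist p q) (n : ℕ) :
    lam ^ n * dist p q ≤ ξ → dist ((g ^ n) p) ((g ^ n) q) = lam ^ n * dist p q ∧
      dist ((g ^ (n+1)) p) ((g ^ (n+1)) q) = lam ^ (n+1) * dist p q := by
  induction n with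
  | zero => intro _; simpa using h1
  | succ n ih =>
    intro h
    have hd : 0 ≤ dist p q := dist_nonneg
    have hL : 0 < lam ^ n := by positivity
    have hle : lam ^ n * dist p q ≤ lam ^ (n+1) * dist p q := by
      apply mul_le_mul_of_nonneg_right _ hd
      rw [pow_succ]; nlinarith
    obtain ⟨h2, h3⟩ := ih (hle.trans h)
    refine ⟨h3, ?_⟩
    have h4 := hss ((g ^ (n+1)) p) ((g ^ (n+1)) q) (by rw [h3]; exact h)
    have e1 : ∀ w, g ((g ^ (n+1)) w) = (g ^ (n+2)) w := fun w => by
      rw [pow_succ' g (n+1)]; rfl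
    have e2 : ∀ w, g.symm ((g ^ (n+1)) w) = (g ^ n) w := fun w => by
      rw [pow_succ' g n]; simp
    rw [e1, e1, e2, e2, h2, h3] at h4
    rcases hd.eq_or_lt with h0 | h0
    · rw [dist_eq_zero.mp h0.symm]; simp
    · have : lam ^ n * dist p q < lam * (lam ^ (n+1) * dist p q) := by
        have : 0 < lam ^ n * dist p q := by positivity
        have h5 : lam * (lam ^ (n+1) * dist p q) = lam * lam * (lam ^ n * dist p q) := by ring
        rw [h5]; nlinarith
      rcases max_cases (dist ((g ^ (n+2)) p) ((g ^ (n+2)) q)) (lam ^ n * dist p q) with h6 | h6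
      · rw [h6.1] at h4; rw [h4]; ring
      · rw [h6.1] at h4; linarith

theorem aux_stable (hξ : 0 < ξ) (hlam : 1 < lam)
    (hss : ∀ p q : M, dist p q ≤ ξ →
      max (dist (g p) (g q)) (dist (g.symm p) (g.symm q)) = lam * dist p q)
    (p q : M) (h : ∀ n : ℕ, dist ((g ^ n) p) ((g ^ n) q) ≤ ξ / (2 * lam)) :
    dist (g.symm p) (g.symm q) = lam * dist p q := by
  have hsm : ξ / (2 * lam) ≤ ξ := div_le_self hξ.le (by linarith)
  rcases (dist_nonneg : 0 ≤ dist p q).eq_or_lt with h0 | h0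
  · rw [dist_eq_zero.mp h0.symm]; simp
  have h00 := hss p q (le_trans (by simpa using h 0) hsm)
  rcases max_cases (dist (g p) (g q)) (dist (g.symm p) (g.symm q)) with h6 | h6
  swap
  · rw [h6.1] at h00; exact h00
  exfalso
  rw [h6.1] at h00
  have key : ∀ n : ℕ, lam ^ n * dist p q ≤ ξ := by
    intro n
    induction n with
    | zero => simpa using (h 0).trans hsm
    | succ n ih =>
      rw [← (aux_expand g ξ lam hlam hss p q h00 n ih).2]
      exact (h _).trans hsm
  obtain ⟨n, hn⟩ := pow_unbounded_of_one_lt (ξ / dist p q) hlam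
  have := key n
  rw [div_lt_iff₀ h0] at hn
  linarith

theorem aux_stable_pow (hξ : 0 < ξ) (hlam : 1 < lam)
    (hss : ∀ p q : M, dist p q ≤ ξ →
      max (dist (g p) (g q)) (dist (g.symm p) (g.symm q)) = lam * dist p q)
    (p q : M) (h : ∀ n : ℕ, dist ((g ^ n) p) ((g ^ n) q) ≤ ξ / (2 * lam)) (n : ℕ) :
    lam ^ n * dist ((g ^ n) p) ((g ^ n) q) = dist p q := by
  induction n with
  | zero => simp
  | succ n ih =>
    have := aux_stable g ξ lam hξ hlam hss ((g ^ (n+1)) p) ((g ^ (n+1)) q) (fun m => by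
      have := h (m + (n+1))
      rw [pow_add] at this
      exact this)
    have e2 : ∀ w, g.symm ((g ^ (n+1)) w) = (g ^ n) w := fun w => by
      rw [pow_succ' g n]; simp
    rw [e2, e2] at this
    rw [← ih, this]; ring

theorem aux_upper (hlam : 1 < lam)
    (hss : ∀ p q : M, dist p q ≤ ξ →
      max (dist (g p) (g q)) (dist (g.symm p) (g.symm q)) = lam * dist p q)
    (p q : M) (n : ℕ) :
    lam ^ n * dist p q ≤ ξ → dist ((g ^ n) p) ((g ^ n) q) ≤ lam ^ n * dist p q := by
  induction n with
  | zero => intro _; simp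
  | succ n ih =>
    intro h
    have hd : 0 ≤ dist p q := dist_nonneg
    have hL : 0 < lam ^ n := by positivity
    have hle : lam ^ n * dist p q ≤ lam ^ (n+1) * dist p q := by
      apply mul_le_mul_of_nonneg_right _ hd
      rw [pow_succ]; nlinarith
    have h2 := ih (hle.trans h)
    have h4 := hss ((g ^ n) p) ((g ^ n) q) (by linarith)
    have e1 : ∀ w, g ((g ^ n) w) = (g ^ (n+1)) w := fun w => by
      rw [pow_succ' g n]; rfl
    rw [e1, e1] at h4
    have h5 := le_max_left (dist ((g ^ (n+1)) p) ((g ^ (n+1)) q))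
      (dist (g.symm ((g ^ n) p)) (g.symm ((g ^ n) q)))
    rw [h4] at h5
    refine h5.trans ?_
    rw [pow_succ', mul_assoc]
    exact mul_le_mul_of_nonneg_left h2 (by linarith)

theorem aux_side (hξ : 0 < ξ) (hlam : 1 < lam)
    (hss : ∀ p q : M, dist p q ≤ ξ →
      max (dist (g p) (g q)) (dist (g.symm p) (g.symm q)) = lam * dist p q)
    (p q z : M) (h1 : dist (g p) (g z) = lam * dist p z) (h0 : dist p z ≤ ξ / (2 * lam))
    (h : ∀ n : ℕ, dist ((g ^ n) q) ((g ^ n) z) ≤ ξ / (2 * lam)) (n : ℕ) :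
    lam ^ n * dist p q ≤ ξ / (2 * lam) →
      lam * (lam ^ n * dist p z) ≤ ξ ∧ dist ((g ^ n) p) ((g ^ n) z) = lam ^ n * dist p z := by
  have hsm : ξ / (2 * lam) ≤ ξ := div_le_self hξ.le (by linarith)
  have hsm2 : lam * (ξ / (2 * lam)) = ξ / 2 := by field_simp
  have hl0 : 0 < lam := by linarith
  induction n with
  | zero =>
    intro _
    have := mul_le_mul_of_nonneg_left h0 hl0.le
    refine ⟨?_, by simp⟩
    rw [pow_zero, one_mul]; linarith
  | succ n ih =>
    intro hD
    have hd : 0 ≤ dist p q := dist_nonneg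
    have hL : 0 < lam ^ n := by positivity
    have hle : lam ^ n * dist p q ≤ lam ^ (n+1) * dist p q := by
      apply mul_le_mul_of_nonneg_right _ hd
      rw [pow_succ]; nlinarith
    obtain ⟨h2, h3⟩ := ih (hle.trans hD)
    have h4 : 0 ≤ lam ^ n * dist p z := by positivity
    have h5 := (aux_expand g ξ lam hlam hss p z h1 n (by nlinarith)).2
    refine ⟨?_, h5⟩
    rw [← h5]
    have h6 := aux_upper g ξ lam hlam hss p q (n+1) (by linarith)
    have h7 := dist_triangle ((g ^ (n+1)) p) ((g ^ (n+1)) q) ((g ^ (n+1)) z)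
    have h8 := h (n+1)
    have h9 : dist ((g ^ (n+1)) p) ((g ^ (n+1)) z) ≤ 2 * (ξ / (2 * lam)) := by linarith
    have := mul_le_mul_of_nonneg_left h9 hl0.le
    linarith

end aux



theorem stmt_6 {M : Type*} [MetricSpace M] [CompactSpace M]
    (f : Equiv.Perm M) (hf : Continuous f) (hf' : Continuous f.symm)
    (ξ lam : ℝ) (hξ : 0 < ξ) (hlam : 1 < lam)
    (hexp : ∀ x y : M, x ≠ y → ∃ n : ℤ, ξ < dist ((f ^ n) x) ((f ^ n) y))
    (hss : ∀ p q : M, dist p q ≤ ξ →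
      max (dist (f p) (f q)) (dist (f.symm p) (f.symm q)) = lam * dist p q) :
    ∀ ε > (0 : ℝ), ∃ δ > (0 : ℝ), ∀ x y z : M,
      (∀ n : ℕ, dist ((f.symm ^ n) x) ((f.symm ^ n) z) ≤ ξ / (2 * lam)) →
      (∀ n : ℕ, dist ((f ^ n) y) ((f ^ n) z) ≤ ξ / (2 * lam)) →
      0 < dist x y → dist x y < ξ →
      dist (f.symm x) (f.symm y) = lam * dist x y →
      dist (f (f x)) (f (f y)) = lam * dist (f x) (f y) →
      dist x y < δ →
      1 / lam ^ 2 - ε ≤ dist x z / dist z y ∧ dist x z / dist z y ≤ 1 + ε := by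
  intro ε hε
  have hl0 : 0 < lam := by linarith
  have hsm : ξ / (2 * lam) ≤ ξ := div_le_self hξ.le (by linarith)
  have hsm2 : lam * (ξ / (2 * lam)) = ξ / 2 := by field_simp
  have hss' : ∀ p q : M, dist p q ≤ ξ →
      max (dist (f.symm p) (f.symm q)) (dist (f.symm.symm p) (f.symm.symm q))
        = lam * dist p q := by
    intro p q h
    rw [max_comm]; exact hss p q h
  obtain ⟨n, hn⟩ := exists_pow_lt_of_lt_one (show (0:ℝ) < min (1/3) (ε/3) by positivity)
    (inv_lt_one_of_one_lt₀ hlam)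
  have hη3 : lam⁻¹ ^ n ≤ 1/3 := hn.le.trans (min_le_left _ _)
  have hηε : lam⁻¹ ^ n ≤ ε/3 := hn.le.trans (min_le_right _ _)
  have hη0 : 0 < lam⁻¹ ^ n := by positivity
  have hLη : lam⁻¹ ^ n * lam ^ n = 1 := by
    rw [← mul_pow, inv_mul_cancel₀ hl0.ne', one_pow]
  have hLpos : 0 < lam ^ n := by positivity
  generalize hηdef : lam⁻¹ ^ n = η at *
  refine ⟨ξ / (2 * lam) / lam ^ (n+1), by positivity, ?_⟩
  intro x y z hu hs hD0 hDξ hc1 hc2 hDδ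
  rw [lt_div_iff₀ (by positivity), mul_comm] at hDδ
  have hle : lam ^ n * dist x y ≤ lam ^ (n+1) * dist x y := by
    apply mul_le_mul_of_nonneg_right _ hD0.le
    rw [pow_succ]; nlinarith
  have hDn : lam ^ n * dist x y ≤ ξ / (2 * lam) := hle.trans hDδ.le
  have hux := aux_stable f.symm ξ lam hξ hlam hss' x z hu
  rw [Equiv.symm_symm] at hux
  have hsy := aux_stable f ξ lam hξ hlam hss y z hs
  have a0 : dist x z ≤ ξ / (2 * lam) := by simpa using hu 0
  have b0 : dist y z ≤ ξ / (2 * lam) := by simpa using hs 0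
  have B1 := (aux_side f.symm ξ lam hξ hlam hss' y x z hsy b0 hu n
    (by rw [dist_comm]; exact hDn)).2
  have B2 := (aux_expand f.symm ξ lam hlam hss' x y hc1 n (hDn.trans hsm)).1
  have B3 := aux_stable_pow f.symm ξ lam hξ hlam hss' x z hu n
  have F1 := (aux_side f ξ lam hξ hlam hss x y z hux a0 hs (n+1) hDδ.le).2
  have hE := hss x y hDξ.le
  have hE1 : dist (f x) (f y) ≤ lam * dist x y := by rw [← hE]; exact le_max_left _ _
  have hE2 : dist x y ≤ lam * dist (f x) (f y) := by
    have h0 : lam ^ 0 * dist x y ≤ lam ^ (n+1) * dist x y :=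
      mul_le_mul_of_nonneg_right (pow_le_pow_right₀ hlam.le (by omega)) hD0.le
    have h1 : lam * dist x y ≤ lam ^ (n+1) * dist x y :=
      mul_le_mul_of_nonneg_right (le_self_pow₀ hlam.le (by omega)) hD0.le
    have h2 := hss (f x) (f y) (by linarith)
    rw [← h2]
    simp
  have hEn : lam ^ n * dist (f x) (f y) ≤ ξ := by
    have := mul_le_mul_of_nonneg_left hE1 hLpos.le
    have e : lam ^ n * (lam * dist x y) = lam ^ (n+1) * dist x y := by ring
    linarith
  have F2 := (aux_expand f ξ lam hlam hss (f x) (f y) hc2 n hEn).1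
  have e1 : ∀ w, (f ^ n) (f w) = (f ^ (n+1)) w := fun w => by rw [pow_succ f n]; rfl
  rw [e1, e1] at F2
  have F3 := aux_stable_pow f ξ lam hξ hlam hss y z hs (n+1)
  have TB := abs_dist_sub_le ((f.symm ^ n) x) ((f.symm ^ n) z) ((f.symm ^ n) y)
  rw [dist_comm ((f.symm ^ n) z), B1, B2] at TB
  have TF := abs_dist_sub_le ((f ^ (n+1)) y) ((f ^ (n+1)) z) ((f ^ (n+1)) x)
  rw [dist_comm _ ((f ^ (n+1)) x), dist_comm _ ((f ^ (n+1)) x), F1, F2] at TF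
  rw [dist_comm z y]
  generalize dist ((f.symm ^ n) x) ((f.symm ^ n) z) = u at *
  generalize dist ((f ^ (n+1)) y) ((f ^ (n+1)) z) = v at *
  have ha0 : 0 ≤ dist x z := dist_nonneg
  have hb0 : 0 ≤ dist y z := dist_nonneg
  generalize dist x z = a at *
  generalize dist y z = b at *
  generalize dist x y = D at *
  generalize dist (f x) (f y) = E at *
  obtain ⟨e, rfl⟩ : ∃ e, E = lam * e := ⟨E / lam, by field_simp⟩
  have hu1 : u = η * a := by rw [← B3, ← mul_assoc, hLη, one_mul]
  have hv0 : lam * v = η * b := by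
    rw [← F3, pow_succ, mul_assoc, ← mul_assoc, hLη, one_mul]
  have hG1 : |D - b| ≤ η * a := by
    have h1 : |lam ^ n * D - lam ^ n * b| = lam ^ n * |D - b| := by
      rw [← mul_sub, abs_mul, abs_of_pos hLpos]
    rw [h1, hu1] at TB
    have h2 : 1 ≤ lam ^ n := one_le_pow₀ hlam.le
    exact (le_mul_of_one_le_left (abs_nonneg (D - b)) h2).trans TB
  have hG2 : |e - a| ≤ η * b := by
    have h1 : |lam ^ n * (lam * e) - lam ^ (n+1) * a| = lam ^ n * (lam * |e - a|) := by
      rw [pow_succ, mul_assoc, ← mul_sub, ← mul_sub, abs_mul, abs_mul, abs_of_pos hLpos,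
        abs_of_pos hl0]
    rw [h1] at TF
    have h2 : 1 ≤ lam ^ n := one_le_pow₀ hlam.le
    have h3 : 0 ≤ |e - a| := abs_nonneg _
    have h4 : 0 ≤ lam * |e - a| := by positivity
    have h5 : lam * |e - a| ≤ v := (le_mul_of_one_le_left h4 h2).trans TF
    have h6 : |e - a| ≤ lam * |e - a| := le_mul_of_one_le_left h3 hlam.le
    have h7 : v ≤ lam * v := le_mul_of_one_le_left (h4.trans h5) hlam.le
    linarith
  rw [abs_le] at hG1 hG2
  have heD : e ≤ D := le_of_mul_le_mul_left hE1 hl0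
  have hlow : D * (1 / lam ^ 2) ≤ e := by
    rw [mul_one_div, div_le_iff₀ (by positivity)]; linarith only [hE2]
  have hk1 : 1 / lam ^ 2 ≤ 1 := by
    rw [div_le_one (by positivity)]; exact one_le_pow₀ hlam.le
  have hk0 : 0 < 1 / lam ^ 2 := by positivity
  generalize 1 / lam ^ 2 = k at *
  have hab : a ≤ b + η * a + η * b := by linarith
  have ha1 : η * a ≤ 1/3 * a := mul_le_mul_of_nonneg_right hη3 ha0
  have hb1 : η * b ≤ 1/3 * b := mul_le_mul_of_nonneg_right hη3 hb0
  have ha2 : a ≤ 2 * b := by linarith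
  have ha3 : η * a ≤ η * (2 * b) := mul_le_mul_of_nonneg_left ha2 hη0.le
  have hb : 0 < b := by linarith
  have hb2 : η * b ≤ ε / 3 * b := mul_le_mul_of_nonneg_right hηε hb0
  constructor
  · rw [le_div_iff₀ hb]
    have : (b - η * a) * k ≤ D * k := mul_le_mul_of_nonneg_right (by linarith) hk0.le
    have h2 : η * a * k ≤ η * a * 1 := mul_le_mul_of_nonneg_left hk1 (by positivity)
    linarith only [this, h2, hlow, hG2.1, hG2.2, ha3, hb2]
  · rw [div_le_iff₀ hb]
    linarith only [hab, ha3, hb2]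
end

section
/- Let f be an expansive homeomorphism of a compact metric space (M,d) with expansivity constant ξ, where d is self-similar for f with expanding factor λ > 1 and constant ξ. Then there is δ > 0 such that for any critical triangle (x,y,z) with d(x,y) < δ one has d(z,y)/d(x,y) ≤ 2. -/
open Filter Topology

theorem grow_aux (u : ℕ → ℝ) (ξ lam : ℝ) (hlam : 1 < lam) (h0 : ∀ k, 0 ≤ u k)
    (hr : ∀ k, u (k+1) ≤ ξ → max (u (k+2)) (u k) = lam * u (k+1))
    (h1 : u 1 = lam * u 0) (n : ℕ) (hb : ∀ k, k ≤ n → u k ≤ ξ) :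
    u (n+1) = lam * u n := by
  induction n with
  | zero => simpa using h1
  | succ n ih =>
    have e := ih (fun k hk => hb k (by omega))
    have r := hr n (hb (n+1) le_rfl)
    rcases max_choice (u (n+2)) (u n) with h | h
    · rw [h] at r; exact r
    · have r2 := r
      rw [h] at r
      have hz : u n = 0 := by
        have := h0 n
        rw [e] at r
        by_contra hne
        have hpos : 0 < u n := lt_of_le_of_ne this (Ne.symm hne)
        have : u n < lam * u n := by nlinarith
        nlinarith
      have hz1 : u (n+1) = 0 := by rw [e, hz, mul_zero]
      have h2 : u (n+2) ≤ 0 := by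
        have := le_max_left (u (n+2)) (u n)
        rw [r2, hz1, mul_zero] at this; exact this
      have : u (n+2) = 0 := le_antisymm h2 (h0 _)
      change u (n+2) = _
      rw [this, hz1, mul_zero]

theorem grow_pow (u : ℕ → ℝ) (ξ lam : ℝ) (hlam : 1 < lam) (h0 : ∀ k, 0 ≤ u k)
    (hr : ∀ k, u (k+1) ≤ ξ → max (u (k+2)) (u k) = lam * u (k+1))
    (h1 : u 1 = lam * u 0) (n : ℕ) (hb : ∀ k, k < n → u k ≤ ξ) :
    u n = lam ^ n * u 0 := by
  induction n with
  | zero => simp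
  | succ n ih =>
    rw [grow_aux u ξ lam hlam h0 hr h1 n (fun k hk => hb k (by omega)),
      ih (fun k hk => hb k (by omega))]
    ring

theorem decay_aux (u : ℕ → ℝ) (ξ lam : ℝ) (hlam : 1 < lam) (h0 : ∀ k, 0 ≤ u k)
    (hr : ∀ k, u (k+1) ≤ ξ → max (u (k+2)) (u k) = lam * u (k+1))
    (hb : ∀ k, u (k+1) ≤ ξ) (n : ℕ) : u n = lam * u (n+1) := by
  have r := hr n (hb n)
  rcases max_choice (u (n+2)) (u n) with h | h
  · have r2 := r
    rw [h] at r
    have hg : ∀ m, u (m + (n+1)) = lam ^ m * u (n+1) := by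
      intro m
      have := grow_pow (fun k => u (k + (n+1))) ξ lam hlam (fun k => h0 _)
        (fun k hk => by
          have h3 := hr (k + (n+1)) (hb _)
          have e1 : k + 2 + (n+1) = k + (n+1) + 2 := by ring
          have e2 : k + 1 + (n+1) = k + (n+1) + 1 := by ring
          simp only [e1, e2]; exact h3)
        (by
          have e1 : 1 + (n+1) = n+2 := by ring
          simp only [e1, zero_add]; exact r)
        m (fun k _ => hb _)
      simpa using this
    have hz : u (n+1) = 0 := by
      by_contra hne
      have hpos : 0 < u (n+1) := lt_of_le_of_ne (h0 _) (Ne.symm hne)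
      obtain ⟨m, hm⟩ := pow_unbounded_of_one_lt (ξ / u (n+1)) hlam
      rw [div_lt_iff₀ hpos, ← hg m] at hm
      exact absurd (hb (m+n)) (not_le.mpr hm)
    have h2 : u n ≤ 0 := by
      have := le_max_right (u (n+2)) (u n)
      rw [r2, hz, mul_zero] at this; exact this
    rw [hz, mul_zero]; exact le_antisymm h2 (h0 _)
  · rw [h] at r; exact r

theorem rec_aux {M : Type*} [MetricSpace M] (g h : Equiv.Perm M) (hgh : ∀ x, h (g x) = x)
    (ξ lam : ℝ)
    (hss : ∀ p q : M, dist p q ≤ ξ →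
      max (dist (g p) (g q)) (dist (h p) (h q)) = lam * dist p q) (x y : M) (k : ℕ)
    (hk : dist ((g ^ (k+1)) x) ((g ^ (k+1)) y) ≤ ξ) :
    max (dist ((g ^ (k+2)) x) ((g ^ (k+2)) y)) (dist ((g ^ k) x) ((g ^ k) y))
      = lam * dist ((g ^ (k+1)) x) ((g ^ (k+1)) y) := by
  have := hss _ _ hk
  have e1 : ∀ w, g ((g ^ (k+1)) w) = (g ^ (k+2)) w := fun w => by
    rw [pow_succ' g (k+1)]; rfl
  have e2 : ∀ w, h ((g ^ (k+1)) w) = (g ^ k) w := fun w => by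
    rw [pow_succ' g k, Equiv.Perm.mul_apply, hgh]
  rwa [e1, e1, e2, e2] at this

theorem stmt_7 {M : Type*} [MetricSpace M] [CompactSpace M]
    (f : Equiv.Perm M) (hf : Continuous f) (hf' : Continuous f.symm)
    (ξ lam : ℝ) (hξ : 0 < ξ) (hlam : 1 < lam)
    (hexp : ∀ x y : M, x ≠ y → ∃ n : ℤ, ξ < dist ((f ^ n) x) ((f ^ n) y))
    (hss : ∀ p q : M, dist p q ≤ ξ →
      max (dist (f p) (f q)) (dist (f.symm p) (f.symm q)) = lam * dist p q) :
    ∃ δ > (0 : ℝ), ∀ x y z : M,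
      (∀ n : ℕ, dist ((f.symm ^ n) x) ((f.symm ^ n) z) ≤ ξ / (2 * lam)) →
      (∀ n : ℕ, dist ((f ^ n) y) ((f ^ n) z) ≤ ξ / (2 * lam)) →
      0 < dist x y → dist x y < ξ →
      dist (f.symm x) (f.symm y) = lam * dist x y →
      dist (f (f x)) (f (f y)) = lam * dist (f x) (f y) →
      dist x y < δ →
      dist z y / dist x y ≤ 2 := by
  have hl0 : 0 < lam := by linarith
  obtain ⟨n, hn⟩ := pow_unbounded_of_one_lt 3 hlam
  have hpn : 0 < lam ^ n := by positivity
  have hξl : ξ / (2 * lam) ≤ ξ / 2 := by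
    apply div_le_div_of_nonneg_left hξ.le (by norm_num) (by linarith)
  refine ⟨ξ / (2 * lam ^ n), by positivity, ?_⟩
  intro x y z hu hs hc0 _ hcrit _ hδ
  have hss' : ∀ p q : M, dist p q ≤ ξ →
      max (dist (f.symm p) (f.symm q)) (dist (f p) (f q)) = lam * dist p q := by
    intro p q h; rw [max_comm]; exact hss p q h
  have hrb := fun p q k => rec_aux f.symm f (fun w => by simp) ξ lam hss' p q k
  have hrf := fun p q k => rec_aux f f.symm (fun w => by simp) ξ lam hss p q k
  -- backward contraction of (x, z)
  have ha : ∀ k : ℕ, dist ((f.symm ^ k) x) ((f.symm ^ k) z) * lam ^ k = dist x z := by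
    intro k
    induction k with
    | zero => simp
    | succ k ih =>
      have := decay_aux (fun k => dist ((f.symm ^ k) x) ((f.symm ^ k) z)) ξ lam hlam
        (fun k => dist_nonneg) (hrb x z) (fun k => by have := hu (k+1); linarith) k
      rw [← ih, this]; ring
  -- first backward expansion of (y, z)
  have hb1 : dist (f.symm y) (f.symm z) = lam * dist y z := by
    have := decay_aux (fun k => dist ((f ^ k) (f.symm y)) ((f ^ k) (f.symm z))) ξ lam hlam
      (fun k => dist_nonneg) (hrf _ _) (fun k => by
        have := hs k
        simp only [pow_succ, Equiv.Perm.mul_apply, Equiv.apply_symm_apply]; linarith) 0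
    simpa using this
  -- expansion of (x, y)
  have hle : ∀ k, k ≤ n → lam ^ k * dist x y ≤ ξ / 2 := by
    intro k hk
    have h1 : lam ^ k ≤ lam ^ n := pow_le_pow_right₀ hlam.le hk
    rw [lt_div_iff₀ (by positivity)] at hδ
    nlinarith
  have hc : ∀ k, k ≤ n → dist ((f.symm ^ k) x) ((f.symm ^ k) y) = lam ^ k * dist x y := by
    intro k
    induction k using Nat.strong_induction_on with
    | _ k ih =>
      intro hk
      have := grow_pow (fun k => dist ((f.symm ^ k) x) ((f.symm ^ k) y)) ξ lam hlam
        (fun k => dist_nonneg) (hrb x y) (by simpa using hcrit) k (fun j hj => by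
          rw [ih j hj (by omega)]
          have := hle j (by omega)
          linarith)
      simpa using this
  have htri : ∀ k, dist ((f.symm ^ k) y) ((f.symm ^ k) z) ≤
      dist ((f.symm ^ k) x) ((f.symm ^ k) y) + dist ((f.symm ^ k) x) ((f.symm ^ k) z) :=
    fun k => dist_triangle_left _ _ _
  have hb : dist ((f.symm ^ n) y) ((f.symm ^ n) z) = lam ^ n * dist y z := by
    have := grow_pow (fun k => dist ((f.symm ^ k) y) ((f.symm ^ k) z)) ξ lam hlam
      (fun k => dist_nonneg) (hrb y z) (by simpa using hb1) n (fun j hj => by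
        have h1 := htri j
        rw [hc j hj.le] at h1
        have := hle j hj.le
        have := hu j
        linarith)
    simpa using this
  have ht := htri n
  rw [hb, hc n le_rfl] at ht
  have han := ha n
  have htr : dist x z ≤ dist x y + dist y z := dist_triangle _ _ _
  rw [div_le_iff₀ hc0, dist_comm z y]
  have hann : 0 ≤ dist ((f.symm ^ n) x) ((f.symm ^ n) z) := dist_nonneg
  generalize dist ((f.symm ^ n) x) ((f.symm ^ n) z) = A at *
  -- 3 A ≤ dist x z and lam ^ n * (b - c) ≤ A
  have hA : 3 * A ≤ dist x z := by nlinarith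
  by_contra hcon
  push Not at hcon
  nlinarith
end

section
/- Let f be an expansive homeomorphism of a compact metric space (M,d) with expansivity constant ξ, where d is self-similar for f with expanding factor λ > 1 and constant ξ. Then for all ε > 0 there is δ > 0 such that for any critical triangle (x,y,z) with d(x,y) < δ, setting a = d(x,z), b = d(z,y), c₀ = d(x,y), c₁ = d(f(x), f(y)), one has |c₁/(λ·c₀) − a/b| < ε. -/
open Filter Topology

/-- Self-similarity. -/
def SelfSim {M : Type*} [MetricSpace M] (f : Equiv.Perm M) (ξ lam : ℝ) : Prop :=
  ∀ p q : M, dist p q ≤ ξ →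
      max (dist (f p) (f q)) (dist (f.symm p) (f.symm q)) = lam * dist p q

theorem SelfSim.inv {M : Type*} [MetricSpace M] {f : Equiv.Perm M} {ξ lam : ℝ}
    (h : SelfSim f ξ lam) : SelfSim f.symm ξ lam := by
  intro p q hpq
  rw [max_comm]
  exact h p q hpq

theorem SelfSim.step {M : Type*} [MetricSpace M] {f : Equiv.Perm M} {ξ lam : ℝ}
    (hlam : 1 < lam) (h : SelfSim f ξ lam) (p q : M)
    (h1 : dist (f p) (f q) = lam * dist p q) (h2 : dist (f p) (f q) ≤ ξ) :
    dist (f (f p)) (f (f q)) = lam * dist (f p) (f q) := by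
  rcases eq_or_ne p q with rfl | hne
  · simp
  have h3 := h _ _ h2
  simp only [Equiv.symm_apply_apply] at h3
  have hd := dist_pos.2 hne
  rcases max_choice (dist (f (f p)) (f (f q))) (dist p q) with h4 | h4
  · rw [← h3, h4]
  · rw [h4, h1] at h3
    have : 1 < lam * lam := by nlinarith
    nlinarith

theorem SelfSim.grow {M : Type*} [MetricSpace M] {f : Equiv.Perm M} {ξ lam : ℝ}
    (hlam : 1 < lam) (h : SelfSim f ξ lam) (k : ℕ) : ∀ (p q : M)
    (_ : dist (f p) (f q) = lam * dist p q) (_ : lam ^ k * dist p q ≤ ξ),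
    dist ((f ^ (k+1)) p) ((f ^ (k+1)) q) = lam ^ (k+1) * dist p q := by
  induction k with
  | zero => intro p q h1 _; simpa using h1
  | succ k ih =>
    intro p q h1 h2
    have e : lam ^ (k+1) * dist p q = lam ^ k * dist (f p) (f q) := by rw [h1]; ring
    have hk : 1 ≤ lam ^ k := one_le_pow₀ hlam.le
    have h5 : lam ^ k * dist (f p) (f q) ≤ ξ := by rw [← e]; exact h2
    have h6 : dist (f p) (f q) ≤ ξ := by
      have := dist_nonneg (x := f p) (y := f q)
      nlinarith
    have := ih (f p) (f q) (h.step hlam p q h1 h6) h5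
    rw [pow_succ f (k+1), Equiv.Perm.mul_apply, Equiv.Perm.mul_apply, this, h1]
    ring

theorem SelfSim.back {M : Type*} [MetricSpace M] {f : Equiv.Perm M} {ξ lam : ℝ}
    (hlam : 1 < lam) (h : SelfSim f ξ lam) (y z : M)
    (hb : ∀ n : ℕ, dist ((f ^ n) y) ((f ^ n) z) ≤ ξ) :
    dist (f.symm y) (f.symm z) = lam * dist y z := by
  rcases eq_or_ne y z with rfl | hne
  · simp
  have h0 : dist y z ≤ ξ := by simpa using hb 0
  have h3 := h _ _ h0
  rcases max_choice (dist (f y) (f z)) (dist (f.symm y) (f.symm z)) with h4 | h4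
  · exfalso
    rw [h4] at h3
    have key : ∀ k : ℕ, lam ^ k * dist y z ≤ ξ := by
      intro k
      induction k with
      | zero => simpa using h0
      | succ k ih =>
        rw [← h.grow hlam k y z h3 ih]
        exact hb _
    have hd := dist_pos.2 hne
    obtain ⟨n, hn⟩ := pow_unbounded_of_one_lt (ξ / dist y z) hlam
    rw [div_lt_iff₀ hd] at hn
    linarith [key n]
  · rw [← h3, h4]

theorem SelfSim.contract {M : Type*} [MetricSpace M] {f : Equiv.Perm M} {ξ lam : ℝ}
    (hlam : 1 < lam) (h : SelfSim f ξ lam) (y z : M)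
    (hb : ∀ n : ℕ, dist ((f ^ n) y) ((f ^ n) z) ≤ ξ) (n : ℕ) :
    lam ^ n * dist ((f ^ n) y) ((f ^ n) z) = dist y z := by
  induction n with
  | zero => simp
  | succ n ih =>
    have := h.back hlam ((f ^ (n+1)) y) ((f ^ (n+1)) z) (by
      intro k
      rw [← Equiv.Perm.mul_apply, ← Equiv.Perm.mul_apply, ← pow_add]
      exact hb _)
    rw [pow_succ' f, Equiv.Perm.mul_apply, Equiv.Perm.mul_apply,
      Equiv.symm_apply_apply, Equiv.symm_apply_apply] at this
    rw [this] at ih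
    rw [← ih, pow_succ' f, Equiv.Perm.mul_apply, Equiv.Perm.mul_apply]
    ring

/-- Triangle estimate at time `m+1` in the unstable direction. -/
theorem SelfSim.tri {M : Type*} [MetricSpace M] {f : Equiv.Perm M} {ξ lam : ℝ}
    (hlam : 1 < lam) (h : SelfSim f ξ lam) (x y z : M) (m : ℕ) (A : ℝ)
    (hx : dist (f x) (f z) = lam * dist x z)
    (hxm : lam ^ m * dist x z ≤ ξ)
    (hb : ∀ n : ℕ, dist ((f ^ n) y) ((f ^ n) z) ≤ ξ)
    (hA : dist ((f ^ (m+1)) x) ((f ^ (m+1)) y) = lam ^ (m+1) * A) :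
    |A - dist x z| * (lam ^ (m+1)) ^ 2 ≤ dist z y := by
  have h1 := h.grow hlam m x z hx hxm
  have h2 := h.contract hlam y z hb (m+1)
  have hN : 0 < lam ^ (m+1) := by positivity
  have t1 := dist_triangle ((f ^ (m+1)) x) ((f ^ (m+1)) y) ((f ^ (m+1)) z)
  have t2 := dist_triangle_right ((f ^ (m+1)) x) ((f ^ (m+1)) y) ((f ^ (m+1)) z)
  rw [dist_comm z y, ← h2]
  rw [h1, hA] at t1 t2
  generalize dist ((f ^ (m+1)) y) ((f ^ (m+1)) z) = r at *
  generalize lam ^ (m+1) = N at *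
  have : |A - dist x z| * N ≤ r := by
    have e : |A - dist x z| * N = |(A - dist x z) * N| := by
      rw [abs_mul, abs_of_pos hN]
    rw [e, abs_le]
    constructor <;> nlinarith
  nlinarith

set_option maxHeartbeats 2000000 in
theorem stmt_8 {M : Type*} [MetricSpace M] [CompactSpace M]
    (f : Equiv.Perm M) (hf : Continuous f) (hf' : Continuous f.symm)
    (ξ lam : ℝ) (hξ : 0 < ξ) (hlam : 1 < lam)
    (hexp : ∀ x y : M, x ≠ y → ∃ n : ℤ, ξ < dist ((f ^ n) x) ((f ^ n) y))
    (hss : ∀ p q : M, dist p q ≤ ξ →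
      max (dist (f p) (f q)) (dist (f.symm p) (f.symm q)) = lam * dist p q) :
    ∀ ε > (0 : ℝ), ∃ δ > (0 : ℝ), ∀ x y z : M,
      (∀ n : ℕ, dist ((f.symm ^ n) x) ((f.symm ^ n) z) ≤ ξ / (2 * lam)) →
      (∀ n : ℕ, dist ((f ^ n) y) ((f ^ n) z) ≤ ξ / (2 * lam)) →
      0 < dist x y → dist x y < ξ →
      dist (f.symm x) (f.symm y) = lam * dist x y →
      dist (f (f x)) (f (f y)) = lam * dist (f x) (f y) →
      dist x y < δ →
      |dist (f x) (f y) / (lam * dist x y) - dist x z / dist z y| < ε := by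
  intro ε hε
  have h : SelfSim f ξ lam := hss
  have hl0 : 0 < lam := by linarith
  obtain ⟨K, hK0, hK⟩ : ∃ K : ℝ, 0 < K ∧ K * (lam ^ 2 - 1) = 2 * lam ^ 2 := by
    have : 0 < lam ^ 2 - 1 := by nlinarith
    exact ⟨2 * lam ^ 2 / (lam ^ 2 - 1), by positivity, by field_simp⟩
  obtain ⟨m, hm⟩ := pow_unbounded_of_one_lt (max (2 * K) (2 * K ^ 2 / ε)) hlam
  have hmN : lam ^ m ≤ lam ^ (m+1) := pow_le_pow_right₀ hlam.le (by omega)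
  have hN1 : 1 ≤ lam ^ (m+1) := one_le_pow₀ hlam.le
  have hNl : lam ^ (m+1) = lam ^ m * lam := pow_succ _ _
  have hm0 : 1 ≤ lam ^ m := one_le_pow₀ hlam.le
  have hNK : 2 * K < lam ^ (m+1) := lt_of_lt_of_le ((le_max_left _ _).trans_lt hm) hmN
  have hNε : 2 * K ^ 2 < lam ^ (m+1) * ε := by
    rw [← div_lt_iff₀ hε]
    exact lt_of_lt_of_le ((le_max_right _ _).trans_lt hm) hmN
  refine ⟨ξ / (lam ^ (m+1) * (K + 1)), by positivity, ?_⟩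
  intro x y z hxz hyz hpos hlt hcr1 hcr2 hδ
  rw [lt_div_iff₀ (by positivity)] at hδ
  have hle : ξ / (2 * lam) ≤ ξ := div_le_self hξ.le (by linarith)
  have hxz' := fun n => (hxz n).trans hle
  have hyz' := fun n => (hyz n).trans hle
  have hx : dist (f x) (f z) = lam * dist x z := h.inv.back hlam x z hxz'
  have hy : dist (f.symm y) (f.symm z) = lam * dist y z := h.back hlam y z hyz'
  have hxz0 : dist x z ≤ ξ := by simpa using hxz' 0
  have hyz0 : dist y z ≤ ξ := by simpa using hyz' 0
  have hc1 : dist (f x) (f y) ≤ lam * dist x y := by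
    rw [← hss x y hlt.le]; exact le_max_left _ _
  have hc0N : lam ^ (m+1) * dist x y ≤ ξ := by
    have : 0 ≤ dist x y * lam ^ (m+1) * K := by positivity
    nlinarith
  have hc0K : lam ^ (m+1) * (K * dist x y) ≤ ξ := by
    have : 0 ≤ dist x y * lam ^ (m+1) := by positivity
    nlinarith
  -- both estimates, for any time at which a and b are still small
  have est : ∀ k ≤ m, lam ^ k * dist x z ≤ ξ → lam ^ k * dist y z ≤ ξ →
      |dist (f x) (f y) / lam - dist x z| * (lam ^ (k+1)) ^ 2 ≤ dist z y ∧
      |dist x y - dist z y| * (lam ^ (k+1)) ^ 2 ≤ dist x z := by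
    intro k hk ha hb
    have hkm : lam ^ (k+1) ≤ lam ^ (m+1) := pow_le_pow_right₀ hlam.le (by omega)
    have hck : lam ^ (k+1) * dist x y ≤ ξ := by nlinarith
    have hkk : 0 < lam ^ k := by positivity
    constructor
    · apply h.tri hlam x y z k _ hx ha hyz'
      have e : lam ^ (k+1) * (dist (f x) (f y) / lam) = lam ^ k * dist (f x) (f y) := by
        field_simp
        ring
      rw [e, pow_succ f, Equiv.Perm.mul_apply, Equiv.Perm.mul_apply]
      cases k with
      | zero => simp
      | succ j =>
        apply h.grow hlam j _ _ hcr2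
        calc lam ^ j * dist (f x) (f y) ≤ lam ^ j * (lam * dist x y) := by gcongr
          _ = lam ^ (j+1) * dist x y := by ring
          _ ≤ lam ^ (j+1+1) * dist x y := by
            gcongr
            · exact hlam.le
            · omega
          _ ≤ ξ := hck
    · have := h.inv.tri hlam y x z k (dist x y) hy hb hxz' (by
        rw [dist_comm]
        apply h.inv.grow hlam k _ _ hcr1
        calc lam ^ k * dist x y ≤ lam ^ (k+1) * dist x y := by
              gcongr
              · exact hlam.le
              · omega
          _ ≤ ξ := hck)
      rw [dist_comm z y, dist_comm x z]
      exact this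
  have e0 := est 0 (by omega) (by simpa using hxz0) (by simpa using hyz0)
  have em := est m le_rfl
  rw [dist_comm y z] at em
  have hc1' : dist (f x) (f y) / lam ≤ dist x y := by
    rw [div_le_iff₀ hl0]; linarith
  have ha0 : 0 ≤ dist x z := dist_nonneg
  have hb0 : 0 ≤ dist z y := dist_nonneg
  have hgoal : dist (f x) (f y) / (lam * dist x y) = (dist (f x) (f y) / lam) / dist x y := by
    rw [div_div]
  rw [hgoal]
  clear est hgoal
  generalize dist (f x) (f y) / lam = c1 at *
  generalize dist x y = c at *
  generalize dist x z = a at *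
  generalize dist z y = b at *
  have hsum : a + b ≤ K * c := by
    obtain ⟨e1, e2⟩ := e0
    simp only [zero_add, pow_one] at e1 e2
    have s1 : (a - c) * lam ^ 2 ≤ b := by
      have := neg_abs_le (c1 - a)
      nlinarith [sq_nonneg lam]
    have s2 : (b - c) * lam ^ 2 ≤ a := by
      have := neg_abs_le (c - b)
      nlinarith [sq_nonneg lam]
    have hq : 0 < lam ^ 2 - 1 := by nlinarith
    have : (a + b) * (lam ^ 2 - 1) ≤ (K * c) * (lam ^ 2 - 1) := by
      have : (K * c) * (lam ^ 2 - 1) = c * (2 * lam ^ 2) := by rw [← hK]; ring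
      rw [this]; nlinarith
    exact le_of_mul_le_mul_right this hq
  have hKc : lam ^ m * (K * c) ≤ ξ := by
    have h1 : 0 < K * c := by positivity
    exact (mul_le_mul_of_nonneg_right hmN h1.le).trans hc0K
  have hm00 : 0 ≤ lam ^ m := by linarith
  obtain ⟨f1, f2⟩ := em
    ((mul_le_mul_of_nonneg_left (by linarith) hm00).trans hKc)
    ((mul_le_mul_of_nonneg_left (by linarith) hm00).trans hKc)
  clear hNl em
  generalize lam ^ (m+1) = N at *
  have hNN : N ≤ N ^ 2 := by nlinarith
  have hbc : c / 2 ≤ b := by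
    have h1 : (c - b) * N ^ 2 ≤ K * c := by
      have := le_abs_self (c - b)
      nlinarith [sq_nonneg N]
    by_contra hcon
    push Not at hcon
    have : c / 2 * N ^ 2 ≤ (c - b) * N ^ 2 := by gcongr; linarith
    nlinarith
  have hbpos : 0 < b := by linarith
  have heq : c1 / c - a / b = ((c1 - a) * b - a * (c - b)) / (c * b) := by
    field_simp; ring
  rw [heq, abs_div, abs_of_pos (mul_pos hpos hbpos), div_lt_iff₀ (by positivity)]
  have hnum : |(c1 - a) * b - a * (c - b)| ≤ |c1 - a| * b + a * |c - b| := by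
    refine (abs_sub _ _).trans ?_
    rw [abs_mul, abs_mul, abs_of_pos hbpos, abs_of_nonneg ha0]
  have hnum2 : (|c1 - a| * b + a * |c - b|) * N ^ 2 ≤ K ^ 2 * c ^ 2 := by
    have : (|c1 - a| * b + a * |c - b|) * N ^ 2 ≤ b * b + a * a := by nlinarith
    have : (a + b) ^ 2 ≤ (K * c) ^ 2 := by gcongr
    nlinarith
  have hfin : K ^ 2 * c ^ 2 < ε * (c * b) * N ^ 2 := by
    have g1 : 2 * K ^ 2 < N ^ 2 * ε := by nlinarith
    have g2 : 2 * K ^ 2 * (c * (c/2)) < N ^ 2 * ε * (c * (c/2)) :=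
      mul_lt_mul_of_pos_right g1 (by positivity)
    have g3 : N ^ 2 * ε * (c * (c/2)) ≤ N ^ 2 * ε * (c * b) := by gcongr
    nlinarith
  have hN2 : 0 < N ^ 2 := by positivity
  refine lt_of_le_of_lt hnum ?_
  exact lt_of_mul_lt_mul_right (hnum2.trans_lt hfin) hN2.le
end

section
/- Let f be an expansive homeomorphism of a compact metric space (M,d) with expansivity constant ξ, where d is self-similar for f with expanding factor λ > 1 and constant ξ. Then for every integer k ≥ 0 and every subset X ⊆ M, cov_{ξ/λᵏ}(X, d) = cov_ξ(X, dᶠₖ). -/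
open Filter Topology

/-- Diameter of a set with respect to an arbitrary "metric" `ρ`. -/
noncomputable def rdiam {M : Type*} (ρ : M → M → ℝ) (A : Set M) : ℝ :=
  sSup {r : ℝ | ∃ a ∈ A, ∃ b ∈ A, r = ρ a b}

/-- Minimal cardinality of a finite cover of `X` by sets of `ρ`-diameter `< ε`. -/
noncomputable def covN {M : Type*} (X : Set M) (ρ : M → M → ℝ) (ε : ℝ) : ℕ :=
  sInf {n : ℕ | ∃ U : Fin n → Set M, X ⊆ (⋃ i, U i) ∧ ∀ i, rdiam ρ (U i) < ε}

/-- `dᶠₙ(x,y) = max_{|k| ≤ n} d(fᵏ x, fᵏ y)`. -/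
noncomputable def dFn {M : Type*} [MetricSpace M] (f : Equiv.Perm M) (n : ℕ) (x y : M) : ℝ :=
  sSup {r : ℝ | ∃ k : ℤ, |k| ≤ (n : ℤ) ∧ r = dist ((f ^ k) x) ((f ^ k) y)}


lemma aux_le_dFn {M : Type*} [MetricSpace M] [CompactSpace M] (f : Equiv.Perm M) (n : ℕ) (x y : M)
    (k : ℤ) (hk : |k| ≤ (n : ℤ)) : dist ((f ^ k) x) ((f ^ k) y) ≤ dFn f n x y := by
  apply le_csSup
  · refine ⟨Metric.diam (Set.univ : Set M), ?_⟩
    rintro r ⟨k, -, rfl⟩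
    exact Metric.dist_le_diam_of_mem isCompact_univ.isBounded trivial trivial
  · exact ⟨k, hk, rfl⟩

lemma aux_dFn_le {M : Type*} [MetricSpace M] (f : Equiv.Perm M) (n : ℕ) (x y : M) (B : ℝ)
    (h : ∀ k : ℤ, |k| ≤ (n : ℤ) → dist ((f ^ k) x) ((f ^ k) y) ≤ B) : dFn f n x y ≤ B := by
  apply csSup_le
  · exact ⟨_, 0, by simp, rfl⟩
  · rintro r ⟨k, hk, rfl⟩
    exact h k hk

lemma aux_zero {M : Type*} [MetricSpace M] [CompactSpace M] (f : Equiv.Perm M) (x y : M) :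
    dFn f 0 x y = dist x y := by
  apply le_antisymm
  · apply aux_dFn_le
    intro k hk
    have : k = 0 := by simpa using hk
    subst this
    simp
  · simpa using aux_le_dFn f 0 x y 0 (by simp)

lemma aux_mono {M : Type*} [MetricSpace M] [CompactSpace M] (f : Equiv.Perm M) (x y : M)
    {m n : ℕ} (h : m ≤ n) : dFn f m x y ≤ dFn f n x y := by
  apply aux_dFn_le
  intro k hk
  exact aux_le_dFn f n x y k (hk.trans (by exact_mod_cast h))

lemma aux_succ {M : Type*} [MetricSpace M] [CompactSpace M]
    (f : Equiv.Perm M) (ξ lam : ℝ) (hlam : 1 < lam)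
    (hss : ∀ p q : M, dist p q ≤ ξ →
      max (dist (f p) (f q)) (dist (f.symm p) (f.symm q)) = lam * dist p q)
    (x y : M) (j : ℕ) (hj : dFn f j x y ≤ ξ) : dFn f (j + 1) x y = lam * dFn f j x y := by
  have hl : 0 < lam := by linarith
  have key : ∀ i : ℤ, |i| ≤ (j : ℤ) →
      max (dist ((f ^ (i + 1)) x) ((f ^ (i + 1)) y)) (dist ((f ^ (i - 1)) x) ((f ^ (i - 1)) y))
        = lam * dist ((f ^ i) x) ((f ^ i) y) := by
    intro i hi
    have h := hss ((f ^ i) x) ((f ^ i) y) ((aux_le_dFn f j x y i hi).trans hj)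
    have e1 : ∀ z, (f ^ (i + 1)) z = f ((f ^ i) z) := by
      intro z
      rw [add_comm, zpow_add, zpow_one, Equiv.Perm.mul_apply]
    have e2 : ∀ z, (f ^ (i - 1)) z = f.symm ((f ^ i) z) := by
      intro z
      rw [sub_eq_add_neg, add_comm, zpow_add, zpow_neg_one, Equiv.Perm.mul_apply]
      rfl
    rw [e1, e1, e2, e2, h]
  have up : ∀ i : ℤ, |i| ≤ (j : ℤ) →
      lam * dist ((f ^ i) x) ((f ^ i) y) ≤ lam * dFn f j x y := fun i hi =>
    mul_le_mul_of_nonneg_left (aux_le_dFn f j x y i hi) hl.le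
  apply le_antisymm
  · apply aux_dFn_le
    intro k hk
    push_cast at hk
    rw [abs_le] at hk
    by_cases h1 : 0 < k
    · have hi : |k - 1| ≤ (j : ℤ) := by rw [abs_le]; omega
      have h := (key _ hi).le.trans (up _ hi)
      have h := (le_max_left _ _).trans h
      simpa using h
    · by_cases h2 : k < 0
      · have hi : |k + 1| ≤ (j : ℤ) := by rw [abs_le]; omega
        have h := (key _ hi).le.trans (up _ hi)
        have h := (le_max_right _ _).trans h
        simpa using h
      · have hk0 : |k| ≤ (j : ℤ) := by rw [abs_le]; omega
        have h := up _ hk0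
        have h3 : (0:ℝ) ≤ dist ((f ^ k) x) ((f ^ k) y) := dist_nonneg
        nlinarith
  · rw [mul_comm, ← le_div_iff₀ hl]
    apply aux_dFn_le
    intro i hi
    rw [le_div_iff₀ hl, mul_comm, ← key i hi]
    rw [abs_le] at hi
    apply max_le
    · apply aux_le_dFn
      rw [abs_le]; push_cast; omega
    · apply aux_le_dFn
      rw [abs_le]; push_cast; omega

lemma aux_rdiam_lt {M : Type*} (ρ σ : M → M → ℝ) (A : Set M) (ε c B : ℝ) (hc : 0 < c)
    (hε : 0 < ε) (hB : ∀ a b, ρ a b ≤ B)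
    (h : ∀ a b, ρ a b ≤ ε → σ a b ≤ c * ρ a b) (hd : rdiam ρ A < ε) : rdiam σ A < c * ε := by
  rcases A.eq_empty_or_nonempty with rfl | ⟨a, ha⟩
  · simp [rdiam]; positivity
  · refine lt_of_le_of_lt ?_ (mul_lt_mul_of_pos_left hd hc)
    refine csSup_le (s := {r : ℝ | ∃ a ∈ A, ∃ b ∈ A, r = σ a b}) ⟨_, a, ha, a, ha, rfl⟩ ?_
    rintro r ⟨x, hx, y, hy, rfl⟩
    have h1 : ρ x y ≤ rdiam ρ A := by
      apply le_csSup
      · refine ⟨B, ?_⟩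
        rintro r ⟨x, -, y, -, rfl⟩
        exact hB x y
      · exact ⟨x, hx, y, hy, rfl⟩
    exact (h x y (h1.trans hd.le)).trans (mul_le_mul_of_nonneg_left h1 hc.le)

theorem stmt_10 {M : Type*} [MetricSpace M] [CompactSpace M]
    (f : Equiv.Perm M) (hf : Continuous f) (hf' : Continuous f.symm)
    (ξ lam : ℝ) (hξ : 0 < ξ) (hlam : 1 < lam)
    (hexp : ∀ x y : M, x ≠ y → ∃ n : ℤ, ξ < dist ((f ^ n) x) ((f ^ n) y))
    (hss : ∀ p q : M, dist p q ≤ ξ →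
      max (dist (f p) (f q)) (dist (f.symm p) (f.symm q)) = lam * dist p q) :
    ∀ (k : ℕ) (X : Set M),
      covN X (fun a b => dist a b) (ξ / lam ^ k) = covN X (dFn f k) ξ := by
  intro k X
  have hl : 0 < lam := by linarith
  have hlk : 0 < lam ^ k := by positivity
  have hbd : ∀ a b : M, dist a b ≤ Metric.diam (Set.univ : Set M) := fun a b =>
    Metric.dist_le_diam_of_mem isCompact_univ.isBounded trivial trivial
  have h1 : ∀ a b : M, dist a b ≤ ξ / lam ^ k → dFn f k a b = lam ^ k * dist a b := by
    intro a b hab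
    rw [le_div_iff₀ hlk] at hab
    have : ∀ j : ℕ, j ≤ k → dFn f j a b = lam ^ j * dist a b := by
      intro j
      induction j with
      | zero => intro _; simp [aux_zero]
      | succ j ih =>
        intro hj
        have e := ih (by omega)
        rw [aux_succ f ξ lam hlam hss a b j, e, pow_succ]
        · ring
        · rw [e]
          have : lam ^ j ≤ lam ^ k := pow_le_pow_right₀ hlam.le (by omega)
          have h3 : (0:ℝ) ≤ dist a b := dist_nonneg
          nlinarith
    exact this k le_rfl
  have h2 : ∀ a b : M, dFn f k a b ≤ ξ → dFn f k a b = lam ^ k * dist a b := by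
    intro a b hab
    have : ∀ j : ℕ, j ≤ k → dFn f j a b = lam ^ j * dist a b := by
      intro j
      induction j with
      | zero => intro _; simp [aux_zero]
      | succ j ih =>
        intro hj
        have e := ih (by omega)
        rw [aux_succ f ξ lam hlam hss a b j, e, pow_succ]
        · ring
        · exact (aux_mono f a b (by omega)).trans hab
    exact this k le_rfl
  have main : ∀ A : Set M, rdiam (fun a b => dist a b) A < ξ / lam ^ k ↔
      rdiam (dFn f k) A < ξ := by
    intro A
    constructor
    · intro h
      have := aux_rdiam_lt (fun a b : M => dist a b) (dFn f k) A (ξ / lam ^ k) (lam ^ k) _ hlk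
        (by positivity) hbd (fun a b hab => (h1 a b hab).le) h
      rwa [mul_div_cancel₀ _ hlk.ne'] at this
    · intro h
      have := aux_rdiam_lt (dFn f k) (fun a b : M => dist a b) A ξ (lam ^ k)⁻¹
        (Metric.diam (Set.univ : Set M)) (by positivity) hξ
        (fun a b => aux_dFn_le f k a b _ (fun _ _ => hbd _ _))
        (fun a b hab => by rw [h2 a b hab, inv_mul_cancel_left₀ hlk.ne']) h
      rwa [inv_mul_eq_div] at this
  unfold covN
  simp only [main]
end

section
/- Let f be an expansive homeomorphism of a compact metric space (M,d) with expansivity constant ξ, where d is self-similar for f with expanding factor λ > 1 and constant ξ. Then ent⁺(M) = ent⁻(M) = ent(M)/2. -/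
open Filter Topology

/-- `d⁺ₙ(x,y) = max_{0 ≤ k ≤ n} d(fᵏ x, fᵏ y)`. -/
noncomputable def dPlusn {M : Type*} [MetricSpace M] (f : Equiv.Perm M) (n : ℕ) (x y : M) : ℝ :=
  sSup {r : ℝ | ∃ k : ℕ, k ≤ n ∧ r = dist ((f ^ k) x) ((f ^ k) y)}

/-- `d⁻ₙ(x,y) = max_{0 ≤ k ≤ n} d(f⁻ᵏ x, f⁻ᵏ y)`. -/
noncomputable def dMinusn {M : Type*} [MetricSpace M] (f : Equiv.Perm M) (n : ℕ) (x y : M) : ℝ :=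
  sSup {r : ℝ | ∃ k : ℕ, k ≤ n ∧ r = dist ((f.symm ^ k) x) ((f.symm ^ k) y)}

lemma aux_covN_le {M : Type*} (ρ ρ' : M → M → ℝ) (ε : ℝ) (e : Equiv.Perm M)
    (h : ∀ x y, ρ' x y = ρ (e x) (e y)) :
    {n : ℕ | ∃ U : Fin n → Set M, (Set.univ : Set M) ⊆ (⋃ i, U i) ∧ ∀ i, rdiam ρ (U i) < ε} ⊆
    {n : ℕ | ∃ U : Fin n → Set M, (Set.univ : Set M) ⊆ (⋃ i, U i) ∧ ∀ i, rdiam ρ' (U i) < ε} := by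
  rintro n ⟨U, hU, hd⟩
  refine ⟨fun i => e ⁻¹' U i, ?_, ?_⟩
  · intro x _
    have := hU (Set.mem_univ (e x))
    simpa using this
  · intro i
    have : rdiam ρ' (e ⁻¹' U i) = rdiam ρ (U i) := by
      unfold rdiam
      congr 1
      ext r
      constructor
      · rintro ⟨a, ha, b, hb, rfl⟩
        exact ⟨e a, ha, e b, hb, h a b⟩
      · rintro ⟨a, ha, b, hb, rfl⟩
        exact ⟨e.symm a, by simpa using ha, e.symm b, by simpa using hb, by simp [h]⟩
    rw [this]
    exact hd i

lemma aux_covN_eq {M : Type*} (ρ ρ' : M → M → ℝ) (ε : ℝ) (e : Equiv.Perm M)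
    (h : ∀ x y, ρ' x y = ρ (e x) (e y)) :
    covN (Set.univ : Set M) ρ' ε = covN (Set.univ : Set M) ρ ε := by
  unfold covN
  congr 1
  apply Set.Subset.antisymm
  · exact aux_covN_le ρ' ρ ε e.symm (by intro x y; simp [h])
  · exact aux_covN_le ρ ρ' ε e h

lemma aux_F {M : Type*} [MetricSpace M] (f : Equiv.Perm M) (n : ℕ) (x y : M) :
    dPlusn f (2 * n) x y = dFn f n ((f ^ n) x) ((f ^ n) y) := by
  unfold dPlusn dFn
  congr 1
  ext r
  have key : ∀ (k : ℤ) (z : M), (f ^ k) ((f ^ n) z) = (f ^ (k + n)) z := by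
    intro k z
    rw [zpow_add, zpow_natCast]; rfl
  simp only [key, Set.mem_setOf_eq]
  constructor
  · rintro ⟨k, hk, rfl⟩
    refine ⟨(k : ℤ) - n, by rw [abs_le]; omega, ?_⟩
    simp
  · rintro ⟨k, hk, rfl⟩
    rw [abs_le] at hk
    obtain ⟨j, hj⟩ := Int.eq_ofNat_of_zero_le (show 0 ≤ k + n by omega)
    refine ⟨j, by omega, ?_⟩
    rw [hj]; simp

lemma aux_M {M : Type*} [MetricSpace M] (f : Equiv.Perm M) (n : ℕ) (x y : M) :
    dPlusn f n x y = dMinusn f n ((f ^ n) x) ((f ^ n) y) := by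
  unfold dPlusn dMinusn
  congr 1
  ext r
  have key : ∀ (k : ℕ) (z : M), k ≤ n → (f.symm ^ k) ((f ^ n) z) = (f ^ (n - k)) z := by
    intro k z hk
    obtain ⟨j, rfl⟩ := Nat.exists_eq_add_of_le hk
    have : f.symm ^ k * f ^ (k + j) = f ^ (k + j - k) := by
      rw [pow_add, ← mul_assoc]
      change (f⁻¹) ^ k * _ * _ = _
      simp
    rw [← this]; rfl
  simp only [Set.mem_setOf_eq]
  constructor
  · rintro ⟨k, hk, rfl⟩
    refine ⟨n - k, by omega, ?_⟩
    rw [key _ _ (by omega), key _ _ (by omega), Nat.sub_sub_self hk]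
  · rintro ⟨k, hk, rfl⟩
    exact ⟨n - k, by omega, by rw [key _ _ hk, key _ _ hk]⟩

lemma aux_bdd {M : Type*} [MetricSpace M] [CompactSpace M] :
    ∃ D : ℝ, 0 ≤ D ∧ ∀ x y : M, dist x y ≤ D :=
  ⟨Metric.diam (Set.univ : Set M), Metric.diam_nonneg, fun x y =>
    Metric.dist_le_diam_of_mem isCompact_univ.isBounded (Set.mem_univ x) (Set.mem_univ y)⟩

lemma aux_dle {M : Type*} [MetricSpace M] (f : Equiv.Perm M) (n : ℕ) (x y : M) (D : ℝ)
    (h : ∀ k ≤ n, dist ((f ^ k) x) ((f ^ k) y) ≤ D) : dPlusn f n x y ≤ D := by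
  apply csSup_le
  · exact ⟨_, 0, Nat.zero_le _, rfl⟩
  · rintro r ⟨k, hk, rfl⟩; exact h k hk

lemma aux_dmono {M : Type*} [MetricSpace M] [CompactSpace M] (f : Equiv.Perm M) {m n : ℕ}
    (hmn : m ≤ n) (x y : M) : dPlusn f m x y ≤ dPlusn f n x y := by
  obtain ⟨D, _, hD⟩ := aux_bdd (M := M)
  apply csSup_le_csSup
  · refine ⟨D, ?_⟩
    rintro r ⟨k, hk, rfl⟩; exact hD _ _
  · exact ⟨_, 0, Nat.zero_le _, rfl⟩
  · rintro r ⟨k, hk, rfl⟩; exact ⟨k, hk.trans hmn, rfl⟩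

lemma aux_rmono {M : Type*} [MetricSpace M] [CompactSpace M] (f : Equiv.Perm M) {m n : ℕ}
    (hmn : m ≤ n) (A : Set M) : rdiam (dPlusn f m) A ≤ rdiam (dPlusn f n) A := by
  obtain ⟨D, _, hD⟩ := aux_bdd (M := M)
  rcases A.eq_empty_or_nonempty with rfl | ⟨a, ha⟩
  · simp [rdiam]
  · apply csSup_le
    · exact ⟨_, a, ha, a, ha, rfl⟩
    · rintro r ⟨a, ha, b, hb, rfl⟩
      refine (aux_dmono f hmn a b).trans (le_csSup ?_ ⟨a, ha, b, hb, rfl⟩)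
      refine ⟨D, ?_⟩
      rintro r ⟨a, ha, b, hb, rfl⟩
      exact aux_dle _ _ _ _ _ (fun k _ => hD _ _)

lemma aux_exists {M : Type*} [MetricSpace M] [CompactSpace M] (f : Equiv.Perm M)
    (hf : Continuous f) (n : ℕ) (ξ : ℝ) (hξ : 0 < ξ) :
    ∃ N : ℕ, ∃ U : Fin N → Set M, (Set.univ : Set M) ⊆ (⋃ i, U i) ∧
      ∀ i, rdiam (dPlusn f n) (U i) < ξ := by
  have hc : ∀ k : ℕ, Continuous (fun x => (f ^ k) x) := by
    intro k
    rw [show (fun x => (f ^ k) x) = f^[k] by ext x; rw [Equiv.Perm.iterate_eq_pow]]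
    exact hf.iterate k
  let V : M → Set M := fun x => {y | ∀ k ∈ Finset.range (n + 1),
    dist ((f ^ k) y) ((f ^ k) x) < ξ / 4}
  have hV : ∀ x, V x ∈ 𝓝 x := by
    intro x
    change ∀ᶠ y in 𝓝 x, ∀ k ∈ Finset.range (n + 1), dist ((f ^ k) y) ((f ^ k) x) < ξ / 4
    rw [Filter.eventually_all_finset]
    intro k _
    exact (hc k).continuousAt (Metric.ball_mem_nhds _ (by positivity))
  obtain ⟨t, ht⟩ := CompactSpace.elim_nhds_subcover V hV
  refine ⟨t.card, fun i => V (t.equivFin.symm i), ?_, ?_⟩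
  · intro x _
    have hx : x ∈ ⋃ x ∈ t, V x := by rw [ht]; trivial
    simp only [Set.mem_iUnion] at hx ⊢
    obtain ⟨z, hz, hx⟩ := hx
    exact ⟨t.equivFin ⟨z, hz⟩, by simpa using hx⟩
  · intro i
    have : rdiam (dPlusn f n) (V (t.equivFin.symm i)) ≤ ξ / 2 := by
      apply Real.sSup_le _ (by positivity)
      rintro r ⟨a, ha, b, hb, rfl⟩
      apply aux_dle
      intro k hk
      have h1 := ha k (by simp; omega)
      have h2 := hb k (by simp; omega)
      have := dist_triangle_right ((f ^ k) a) ((f ^ k) b) ((f ^ k) (t.equivFin.symm i : M))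
      linarith
    linarith

lemma aux_cmono {M : Type*} [MetricSpace M] [CompactSpace M] (f : Equiv.Perm M)
    (hf : Continuous f) (ξ : ℝ) (hξ : 0 < ξ) :
    Monotone (fun n => covN (Set.univ : Set M) (dPlusn f n) ξ) := by
  intro m n hmn
  have := Nat.sInf_mem (s := {N : ℕ | ∃ U : Fin N → Set M, (Set.univ : Set M) ⊆ (⋃ i, U i) ∧
      ∀ i, rdiam (dPlusn f n) (U i) < ξ}) (aux_exists f hf n ξ hξ)
  obtain ⟨U, hU, hd⟩ := this
  exact Nat.sInf_le ⟨U, hU, fun i => (aux_rmono f hmn _).trans_lt (hd i)⟩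

lemma aux_half (a : ℕ) : Tendsto (fun n : ℕ => ((n / 2 + a : ℕ) : ℝ) / n) atTop (𝓝 (1 / 2)) := by
  have h0 : Tendsto (fun n : ℕ => ((a : ℝ) + 1) / (n : ℝ)) atTop (𝓝 0) :=
    tendsto_const_div_atTop_nhds_zero_nat _
  have hl := (tendsto_const_nhds (x := (1 / 2 : ℝ))).sub h0
  have hu := (tendsto_const_nhds (x := (1 / 2 : ℝ))).add h0
  rw [sub_zero] at hl
  rw [add_zero] at hu
  refine tendsto_of_tendsto_of_tendsto_of_le_of_le' hl hu ?_ ?_ <;>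
  · filter_upwards [eventually_gt_atTop 0] with n hn
    have hn' : (0 : ℝ) < n := by exact_mod_cast hn
    have h1 : (2 * (n / 2 : ℕ) : ℝ) ≤ n := by exact_mod_cast (by omega)
    have h2 : (n : ℝ) ≤ 2 * (n / 2 : ℕ) + 1 := by exact_mod_cast (by omega)
    have ha : (0 : ℝ) ≤ a := Nat.cast_nonneg a
    push_cast [-Nat.cast_div] at *
    field_simp
    linarith

lemma aux_lim (L : ℕ → ℝ) (hL : Monotone L) (E : ℝ)
    (hE : Tendsto (fun n : ℕ => L (2 * n) / n) atTop (𝓝 E)) :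
    Tendsto (fun n : ℕ => L n / n) atTop (𝓝 (E / 2)) := by
  have hh : ∀ a : ℕ, Tendsto (fun n : ℕ => L (2 * (n / 2 + a)) / n) atTop (𝓝 (E / 2)) := by
    intro a
    have ht : Tendsto (fun n : ℕ => n / 2 + a) atTop atTop :=
      tendsto_atTop_atTop.2 fun b => ⟨2 * b, fun n hn => by omega⟩
    have := (hE.comp ht).mul (aux_half a)
    rw [mul_one_div] at this
    refine this.congr' ?_
    filter_upwards [eventually_ge_atTop 2] with n hn
    have h1 : ((n / 2 + a : ℕ) : ℝ) ≠ 0 := by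
      have : n / 2 + a ≠ 0 := by omega
      exact_mod_cast this
    simp only [Function.comp]
    rw [div_mul_div_cancel₀ h1]
  refine tendsto_of_tendsto_of_tendsto_of_le_of_le (hh 0) (hh 1) ?_ ?_
  · intro n
    exact div_le_div_of_nonneg_right (hL (by omega)) (Nat.cast_nonneg n)
  · intro n
    exact div_le_div_of_nonneg_right (hL (by omega)) (Nat.cast_nonneg n)

theorem stmt_11 {M : Type*} [MetricSpace M] [CompactSpace M]
    (f : Equiv.Perm M) (hf : Continuous f) (hf' : Continuous f.symm)
    (ξ lam : ℝ) (hξ : 0 < ξ) (hlam : 1 < lam)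
    (hexp : ∀ x y : M, x ≠ y → ∃ n : ℤ, ξ < dist ((f ^ n) x) ((f ^ n) y))
    (hss : ∀ p q : M, dist p q ≤ ξ →
      max (dist (f p) (f q)) (dist (f.symm p) (f.symm q)) = lam * dist p q)
    (E : ℝ)
    (hE : Tendsto (fun n : ℕ =>
        Real.log ((covN (Set.univ : Set M) (dFn f n) ξ : ℕ) : ℝ) / (n : ℝ)) atTop (𝓝 E)) :
    Tendsto (fun n : ℕ =>
        Real.log ((covN (Set.univ : Set M) (dPlusn f n) ξ : ℕ) : ℝ) / (n : ℝ)) atTop (𝓝 (E / 2)) ∧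
    Tendsto (fun n : ℕ =>
        Real.log ((covN (Set.univ : Set M) (dMinusn f n) ξ : ℕ) : ℝ) / (n : ℝ)) atTop (𝓝 (E / 2)) := by
  have hplus : Tendsto (fun n : ℕ =>
      Real.log ((covN (Set.univ : Set M) (dPlusn f n) ξ : ℕ) : ℝ) / (n : ℝ))
      atTop (𝓝 (E / 2)) := by
    apply aux_lim (fun n => Real.log ((covN (Set.univ : Set M) (dPlusn f n) ξ : ℕ) : ℝ))
    · intro m n hmn
      have h := aux_cmono f hf ξ hξ hmn
      simp only at h ⊢
      rcases Nat.eq_zero_or_pos (covN (Set.univ : Set M) (dPlusn f m) ξ) with h0 | h0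
      · rw [h0]
        simpa using Real.log_natCast_nonneg _
      · exact Real.log_le_log (by exact_mod_cast h0) (by exact_mod_cast h)
    · refine hE.congr fun n => ?_
      rw [aux_covN_eq _ _ ξ (f ^ n) (aux_F f n)]
  refine ⟨hplus, hplus.congr fun n => ?_⟩
  rw [aux_covN_eq _ _ ξ (f ^ n) (aux_M f n)]
end

section
/- Let f be an expansive homeomorphism of a compact metric space (M,d) with expansivity constant ξ, where d is self-similar for f with expanding factor λ > 1 and constant ξ. If X ⊆ M is an unstable set (diam(fⁿ(X)) → 0 as n → −∞), then the upper capacity ucap(X,d) exists and ucap(X,d) = ent⁺(X)/log(λ) = ent(X)/log(λ). If Y ⊆ M is a stable set (diam(fⁿ(Y)) → 0 as n → +∞), then ucap(Y,d) = ent⁻(Y)/log(λ) = ent(Y)/log(λ). -/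
open Filter Topology

lemma seq_growth (D : ℤ → ℝ) (ξ lam : ℝ) (hlam : 1 < lam) (h0 : ∀ k, 0 ≤ D k)
    (h : ∀ k, D k ≤ ξ → max (D (k+1)) (D (k-1)) = lam * D k) (n : ℕ)
    (hn : D 0 ≤ ξ / lam ^ n) (k : ℕ) (hk : k ≤ n) : D k ≤ lam ^ k * D 0 := by
  induction k with
  | zero => simp
  | succ k ih =>
    have ih := ih (by omega)
    have hp : 0 < lam ^ k := by positivity
    have hpn : 0 < lam ^ n := by positivity
    have h1 : lam ^ k * D 0 ≤ ξ := by
      rw [le_div_iff₀ hpn] at hn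
      have : lam ^ k ≤ lam ^ n := pow_le_pow_right₀ hlam.le (by omega)
      nlinarith [h0 0]
    have h2 := h k (ih.trans h1)
    have h3 : D (k+1) ≤ lam * D k := h2 ▸ le_max_left _ _
    push_cast
    calc D (k+1) ≤ lam * D k := h3
      _ ≤ lam * (lam ^ k * D 0) := by gcongr
      _ = _ := by ring

lemma seq_step (D : ℤ → ℝ) (ξ lam : ℝ) (hlam : 1 < lam) (h0 : ∀ k, 0 ≤ D k)
    (h : ∀ k, D k ≤ ξ → max (D (k+1)) (D (k-1)) = lam * D k) (k : ℤ)
    (hk : ∀ j ≤ k, D j ≤ ξ) : D (k+1) = lam * D k := by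
  by_contra hne
  have hm := h k (hk k le_rfl)
  have h1 : D (k-1) = lam * D k := by
    rcases max_choice (D (k+1)) (D (k-1)) with h2 | h2
    · exact absurd (h2 ▸ hm) hne
    · rw [← h2]; exact hm
  have key : ∀ j : ℕ, D (k - j - 1) = lam * D (k - j) := by
    intro j
    induction j with
    | zero => simpa using h1
    | succ j ih =>
      have hm := h (k - j - 1) (hk _ (by omega))
      have e1 : k - j - 1 + 1 = k - j := by ring
      rw [e1] at hm
      push_cast
      have e2 : k - (j + 1 : ℤ) = k - j - 1 := by ring
      rw [e2]
      rcases max_choice (D (k - j)) (D (k - j - 1 - 1)) with h2 | h2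
      · rw [h2, ih] at hm
        have h3 : D (k-j) = 0 := by
          have := h0 (k-j)
          by_contra hc
          have : 0 < D (k-j) := lt_of_le_of_ne this (Ne.symm hc)
          nlinarith [mul_pos this (sub_pos.2 hlam)]
        have h4 : D (k - j - 1 - 1) ≤ D (k-j) := by rw [← h2]; exact le_max_right _ _
        rw [ih, h3]
        have := h0 (k - j - 1 - 1)
        linarith
      · rw [← h2]; exact hm
  have key2 : ∀ j : ℕ, D (k - j) = lam ^ j * D k := by
    intro j
    induction j with
    | zero => simp
    | succ j ih =>
      have := key j
      push_cast
      rw [← sub_sub, this, ih]; ring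
  have hz : D k = 0 := by
    by_contra hc
    have hp : 0 < D k := lt_of_le_of_ne (h0 k) (Ne.symm hc)
    obtain ⟨j, hj⟩ := pow_unbounded_of_one_lt (ξ / D k) hlam
    rw [div_lt_iff₀ hp] at hj
    have := hk (k - j) (by omega)
    rw [key2] at this
    linarith
  apply hne
  have h4 : D (k+1) ≤ lam * D k := hm ▸ le_max_left _ _
  have := h0 (k+1)
  rw [hz] at h4 ⊢
  linarith

lemma seq_exact (D : ℤ → ℝ) (ξ lam : ℝ) (hlam : 1 < lam) (h0 : ∀ k, 0 ≤ D k)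
    (h : ∀ k, D k ≤ ξ → max (D (k+1)) (D (k-1)) = lam * D k) (n : ℕ)
    (hk : ∀ j : ℤ, j ≤ n → D j ≤ ξ) : D n = lam ^ n * D 0 := by
  induction n with
  | zero => simp
  | succ n ih =>
    have := seq_step D ξ lam hlam h0 h n (fun j hj => hk j (by push_cast; omega))
    push_cast
    rw [this, ih (fun j hj => hk j (by push_cast; omega))]; ring

lemma le_rdiam_aux {M : Type*} {ρ : M → M → ℝ} {B : ℝ} (hB : ∀ a b, ρ a b ≤ B)
    {A : Set M} {a b : M} (ha : a ∈ A) (hb : b ∈ A) : ρ a b ≤ rdiam ρ A := by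
  apply le_csSup
  · refine ⟨B, ?_⟩
    rintro r ⟨a, _, b, _, rfl⟩
    exact hB a b
  · exact ⟨a, ha, b, hb, rfl⟩

lemma rdiam_le_aux {M : Type*} {ρ : M → M → ℝ} {s : ℝ} (hs : 0 ≤ s)
    {A : Set M} (h : ∀ a ∈ A, ∀ b ∈ A, ρ a b ≤ s) : rdiam ρ A ≤ s := by
  apply Real.sSup_le _ hs
  rintro r ⟨a, ha, b, hb, rfl⟩
  exact h a ha b hb

lemma rdiam_nonneg_aux {M : Type*} {ρ : M → M → ℝ} (h : ∀ a b, 0 ≤ ρ a b) (A : Set M) :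
    0 ≤ rdiam ρ A := by
  apply Real.sSup_nonneg
  rintro r ⟨a, _, b, _, rfl⟩
  exact h a b

/-- A cover of size `n` exists. -/
def HasCov {M : Type*} (X : Set M) (ρ : M → M → ℝ) (ε : ℝ) (n : ℕ) : Prop :=
  ∃ U : Fin n → Set M, X ⊆ (⋃ i, U i) ∧ ∀ i, rdiam ρ (U i) < ε

lemma covN_spec {M : Type*} {X : Set M} {ρ : M → M → ℝ} {ε : ℝ} {n : ℕ}
    (h : HasCov X ρ ε n) : HasCov X ρ ε (covN X ρ ε) :=
  Nat.sInf_mem (s := {n | HasCov X ρ ε n}) ⟨n, h⟩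

lemma covN_le {M : Type*} {X : Set M} {ρ : M → M → ℝ} {ε : ℝ} {n : ℕ}
    (h : HasCov X ρ ε n) : covN X ρ ε ≤ n :=
  Nat.sInf_le (s := {n | HasCov X ρ ε n}) h

lemma HasCov.mono {M : Type*} {X : Set M} {ρ ρ' : M → M → ℝ} {ε ε' : ℝ} {n : ℕ}
    (h : HasCov X ρ ε n) (hr : ∀ A, rdiam ρ A < ε → rdiam ρ' A < ε') : HasCov X ρ' ε' n := by
  obtain ⟨U, h1, h2⟩ := h
  exact ⟨U, h1, fun i => hr _ (h2 i)⟩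

lemma HasCov.mul {M : Type*} {X : Set M} {ρ ρ' ρ'' : M → M → ℝ} {ε ε' ε'' : ℝ} {n m : ℕ}
    (h : HasCov X ρ ε n) (h' : HasCov X ρ' ε' m)
    (hr : ∀ A B, rdiam ρ A < ε → rdiam ρ' B < ε' → rdiam ρ'' (A ∩ B ∩ X) < ε'') :
    HasCov X ρ'' ε'' (n * m) := by
  obtain ⟨U, h1, h2⟩ := h
  obtain ⟨V, h3, h4⟩ := h'
  refine ⟨fun i => U (finProdFinEquiv.symm i).1 ∩ V (finProdFinEquiv.symm i).2 ∩ X, ?_,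
    fun i => hr _ _ (h2 _) (h4 _)⟩
  intro x hx
  obtain ⟨i, hi⟩ := Set.mem_iUnion.1 (h1 hx)
  obtain ⟨j, hj⟩ := Set.mem_iUnion.1 (h3 hx)
  refine Set.mem_iUnion.2 ⟨finProdFinEquiv (i, j), ?_⟩
  simp only [Equiv.symm_apply_apply]
  exact ⟨⟨hi, hj⟩, hx⟩

lemma exists_cov {M : Type*} [MetricSpace M] [CompactSpace M] (X : Set M) (ε : ℝ) (hε : 0 < ε) :
    ∃ n, HasCov X (fun a b => dist a b) ε n := by
  obtain ⟨t, -, ht, hc⟩ := Metric.totallyBounded_iff.1 (isCompact_univ (X := M)).totallyBounded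
    (ε/4) (by positivity) |>.imp fun t h => (⟨trivial, h.1, h.2⟩ : True ∧ _ ∧ _)
  obtain ⟨n, e, he⟩ := ht.fin_embedding
  refine ⟨n, fun i => Metric.ball (e i) (ε/4), ?_, fun i => ?_⟩
  · intro x _
    have := hc (Set.mem_univ x)
    rw [← he] at this
    simpa using this
  · refine lt_of_le_of_lt (rdiam_le_aux (s := ε/2) (by positivity) ?_) (by linarith)
    intro a ha b hb
    have := dist_triangle_right a b (e i)
    rw [Metric.mem_ball] at ha hb
    linarith

lemma dist_bdd {M : Type*} [MetricSpace M] [CompactSpace M] (a b : M) :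
    dist a b ≤ Metric.diam (Set.univ : Set M) :=
  Metric.dist_le_diam_of_mem (Metric.isBounded_of_compactSpace) trivial trivial

lemma log_nat_mono {a b : ℕ} (h : a ≤ b) : Real.log a ≤ Real.log b := by
  rcases Nat.eq_zero_or_pos a with rfl | ha
  · simp [Real.log_natCast_nonneg]
  · exact Real.log_le_log (by positivity) (by exact_mod_cast h)

lemma log_nat_mul (a b : ℕ) : Real.log ((a * b : ℕ) : ℝ) ≤ Real.log a + Real.log b := by
  have h1 := Real.log_natCast_nonneg a
  have h2 := Real.log_natCast_nonneg b
  rcases Nat.eq_zero_or_pos a with rfl | ha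
  · simpa using h2
  rcases Nat.eq_zero_or_pos b with rfl | hb
  · simpa using h1
  · push_cast
    rw [Real.log_mul (by positivity) (by positivity)]

section dyn
variable {M : Type*} [MetricSpace M] [CompactSpace M]

lemma dFn_bdd (f : Equiv.Perm M) (n : ℕ) (a b : M) : 
    BddAbove {r : ℝ | ∃ k : ℤ, |k| ≤ (n : ℤ) ∧ r = dist ((f ^ k) a) ((f ^ k) b)} := by
  refine ⟨Metric.diam (Set.univ : Set M), ?_⟩
  rintro r ⟨k, _, rfl⟩
  exact dist_bdd _ _

lemma dPlusn_bdd (f : Equiv.Perm M) (n : ℕ) (a b : M) : 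
    BddAbove {r : ℝ | ∃ k : ℕ, k ≤ n ∧ r = dist ((f ^ k) a) ((f ^ k) b)} := by
  refine ⟨Metric.diam (Set.univ : Set M), ?_⟩
  rintro r ⟨k, _, rfl⟩
  exact dist_bdd _ _

lemma dFn_nonneg (f : Equiv.Perm M) (n : ℕ) (a b : M) : 0 ≤ dFn f n a b := by
  apply Real.sSup_nonneg
  rintro r ⟨k, _, rfl⟩
  exact dist_nonneg

lemma dPlusn_nonneg (f : Equiv.Perm M) (n : ℕ) (a b : M) : 0 ≤ dPlusn f n a b := by
  apply Real.sSup_nonneg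
  rintro r ⟨k, _, rfl⟩
  exact dist_nonneg

lemma dFn_le (f : Equiv.Perm M) (n : ℕ) (a b : M) :
    dFn f n a b ≤ Metric.diam (Set.univ : Set M) := by
  apply Real.sSup_le _ Metric.diam_nonneg
  rintro r ⟨k, _, rfl⟩
  exact dist_bdd _ _

lemma dPlusn_le (f : Equiv.Perm M) (n : ℕ) (a b : M) :
    dPlusn f n a b ≤ Metric.diam (Set.univ : Set M) := by
  apply Real.sSup_le _ Metric.diam_nonneg
  rintro r ⟨k, _, rfl⟩
  exact dist_bdd _ _

lemma dPlusn_le_dFn (f : Equiv.Perm M) (n : ℕ) (a b : M) : dPlusn f n a b ≤ dFn f n a b := by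
  apply Real.sSup_le _ (dFn_nonneg f n a b)
  rintro r ⟨k, hk, rfl⟩
  exact le_csSup (dFn_bdd f n a b) ⟨k, by simpa using hk, by simp⟩

lemma sandwich (f : Equiv.Perm M) 
    (ξ lam : ℝ) (hξ : 0 < ξ) (hlam : 1 < lam)
    (hss : ∀ p q : M, dist p q ≤ ξ →
      max (dist (f p) (f q)) (dist (f.symm p) (f.symm q)) = lam * dist p q)
    (X : Set M)
    (hX : Tendsto (fun n : ℕ => Metric.diam ((fun z => (f.symm ^ n) z) '' X)) atTop (𝓝 0)) :
    ∃ K : ℕ, ∀ n : ℕ, covN X (dPlusn f n) ξ ≤ covN X (dFn f n) ξ ∧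
      covN X (dFn f n) ξ ≤ covN X (fun a b => dist a b) (ξ / lam ^ n) ∧
      covN X (fun a b => dist a b) (ξ / lam ^ n) ≤ K * covN X (dPlusn f n) ξ := by
  have hrec : ∀ p q : M, ∀ k : ℤ, dist ((f ^ k) p) ((f ^ k) q) ≤ ξ →
      max (dist ((f ^ (k+1)) p) ((f ^ (k+1)) q)) (dist ((f ^ (k-1)) p) ((f ^ (k-1)) q))
        = lam * dist ((f ^ k) p) ((f ^ k) q) := by
    intro p q k hk
    have := hss _ _ hk
    rw [add_comm k 1, zpow_one_add, sub_eq_neg_add, zpow_add, zpow_neg_one]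
    exact this
  have hrec' : ∀ p q : M, ∀ k : ℤ, dist ((f ^ (-k)) p) ((f ^ (-k)) q) ≤ ξ →
      max (dist ((f ^ (-(k+1))) p) ((f ^ (-(k+1))) q))
        (dist ((f ^ (-(k-1))) p) ((f ^ (-(k-1))) q))
        = lam * dist ((f ^ (-k)) p) ((f ^ (-k)) q) := by
    intro p q k hk
    rw [← hrec p q (-k) hk, max_comm]
    congr 4 <;> ring_nf
  have hpos : ∀ n : ℕ, 0 < lam ^ n := fun n => by positivity
  have grow : ∀ p q : M, ∀ n : ℕ, dist p q ≤ ξ / lam ^ n → ∀ k : ℤ, |k| ≤ n →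
      dist ((f ^ k) p) ((f ^ k) q) ≤ lam ^ n * dist p q := by
    intro p q n hd k hk
    have hmono : ∀ j : ℕ, j ≤ n → lam ^ j * dist p q ≤ lam ^ n * dist p q := fun j hj =>
      mul_le_mul_of_nonneg_right (pow_le_pow_right₀ hlam.le hj) dist_nonneg
    obtain ⟨j, rfl | rfl⟩ := Int.eq_nat_or_neg k
    · have hj : j ≤ n := by simpa using hk
      have := seq_growth (fun k => dist ((f ^ k) p) ((f ^ k) q)) ξ lam hlam
        (fun _ => dist_nonneg) (hrec p q) n (by simpa using hd) j hj
      exact (by simpa using this : _ ≤ lam ^ j * dist p q).trans (hmono j hj)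
    · have hj : j ≤ n := by simpa using hk
      have := seq_growth (fun k => dist ((f ^ (-k)) p) ((f ^ (-k)) q)) ξ lam hlam
        (fun _ => dist_nonneg) (hrec' p q) n (by simpa using hd) j hj
      exact (by simpa using this : _ ≤ lam ^ j * dist p q).trans (hmono j hj)
  obtain ⟨N, hN⟩ := eventually_atTop.1 (hX.eventually (gt_mem_nhds hξ))
  have small : ∀ p ∈ X, ∀ q ∈ X, ∀ k : ℕ, N ≤ k →
      dist ((f ^ (-(k:ℤ))) p) ((f ^ (-(k:ℤ))) q) ≤ ξ := by
    intro p hp q hq k hk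
    have h1 := Metric.dist_le_diam_of_mem (s := (fun z => (f.symm ^ k) z) '' X)
      (Metric.isBounded_of_compactSpace) ⟨p, hp, rfl⟩ ⟨q, hq, rfl⟩
    have h2 := h1.trans (hN k hk).le
    have e : f ^ (-(k:ℤ)) = f.symm ^ k := by
      rw [zpow_neg, zpow_natCast, ← inv_pow]; rfl
    rw [e]; exact h2
  have stepFC : ∀ n A, rdiam (fun a b : M => dist a b) A < ξ / lam ^ n →
      rdiam (dFn f n) A < ξ := by
    intro n A hA
    have hs := rdiam_nonneg_aux (ρ := fun a b : M => dist a b) (fun _ _ => dist_nonneg) A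
    have hlt := (lt_div_iff₀' (hpos n)).1 hA
    refine lt_of_le_of_lt (rdiam_le_aux (by have := hpos n; positivity) ?_) hlt
    intro a ha b hb
    have hab := le_rdiam_aux (ρ := fun a b : M => dist a b) dist_bdd ha hb
    apply Real.sSup_le _ (by have := hpos n; positivity)
    rintro r ⟨k, hk, rfl⟩
    exact (grow a b n (hab.trans hA.le) k hk).trans
      (mul_le_mul_of_nonneg_left hab (hpos n).le)
  have stepPF : ∀ n A, rdiam (dFn f n) A < ξ → rdiam (dPlusn f n) A < ξ := by
    intro n A hA
    refine lt_of_le_of_lt (rdiam_le_aux (rdiam_nonneg_aux (dFn_nonneg f n) A) ?_) hA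
    intro a ha b hb
    exact (dPlusn_le_dFn f n a b).trans (le_rdiam_aux (dFn_le f n) ha hb)
  have covC : ∀ n, ∃ m, HasCov X (fun a b => dist a b) (ξ / lam ^ n) m := fun n =>
    exists_cov X _ (div_pos hξ (hpos n))
  refine ⟨covN X (fun a b => dist a b) (ξ / lam ^ N), fun n => ?_⟩
  obtain ⟨m, hm⟩ := covC n
  obtain ⟨m', hm'⟩ := covC N
  have hF := hm.mono (stepFC n)
  have hP := hF.mono (stepPF n)
  refine ⟨covN_le ((covN_spec hF).mono (stepPF n)), covN_le ((covN_spec hm).mono (stepFC n)),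
    covN_le ((covN_spec hm').mul (covN_spec hP) ?_)⟩
  intro A B hA hB
  have hs := rdiam_nonneg_aux (dPlusn_nonneg f n) B
  refine lt_of_le_of_lt (rdiam_le_aux (s := rdiam (dPlusn f n) B / lam ^ n)
    (div_nonneg hs (hpos n).le) ?_) (div_lt_div_of_pos_right hB (hpos n))
  rintro p ⟨⟨hpA, hpB⟩, hpX⟩ q ⟨⟨hqA, hqB⟩, hqX⟩
  have hd := le_rdiam_aux (ρ := fun a b : M => dist a b) dist_bdd hpA hqA
  have hd2 := hd.trans hA.le
  have hpl : ∀ k : ℕ, k ≤ n → dist ((f ^ k) p) ((f ^ k) q) ≤ rdiam (dPlusn f n) B := by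
    intro k hk
    exact (le_csSup (dPlusn_bdd f n p q) ⟨k, hk, rfl⟩ : _ ≤ dPlusn f n p q).trans
      (le_rdiam_aux (dPlusn_le f n) hpB hqB)
  have := seq_exact (fun k => dist ((f ^ k) p) ((f ^ k) q)) ξ lam hlam
        (fun _ => dist_nonneg) (hrec p q) n (by
    intro j hj
    obtain ⟨i, rfl | rfl⟩ := Int.eq_nat_or_neg j
    · simpa using (hpl i (by exact_mod_cast hj)).trans hB.le
    · by_cases hi : N ≤ i
      · exact small p hpX q hqX i hi
      · refine (grow p q N hd2 _ (by simp; omega)).trans ?_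
        exact (le_div_iff₀' (hpos N)).1 hd2)
  simp only [zpow_natCast, zpow_zero, Equiv.Perm.coe_one, id] at this
  rw [le_div_iff₀' (hpos n), ← this]
  exact hpl n le_rfl

lemma half (f : Equiv.Perm M) 
    (ξ lam : ℝ) (hξ : 0 < ξ) (hlam : 1 < lam)
    (hss : ∀ p q : M, dist p q ≤ ξ →
      max (dist (f p) (f q)) (dist (f.symm p) (f.symm q)) = lam * dist p q)
    (X : Set M)
    (hX : Tendsto (fun n : ℕ => Metric.diam ((fun z => (f.symm ^ n) z) '' X)) atTop (𝓝 0))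
    (EpX EX : ℝ)
    (hEpX : Tendsto (fun n : ℕ =>
        Real.log ((covN X (dPlusn f n) ξ : ℕ) : ℝ) / (n : ℝ)) atTop (𝓝 EpX))
    (hEX : Tendsto (fun n : ℕ =>
        Real.log ((covN X (dFn f n) ξ : ℕ) : ℝ) / (n : ℝ)) atTop (𝓝 EX)) :
    Tendsto (fun ε : ℝ =>
        Real.log ((covN X (fun a b => dist a b) ε : ℕ) : ℝ) / (- Real.log ε))
      (𝓝[>] (0 : ℝ)) (𝓝 (EpX / Real.log lam)) ∧
      EpX / Real.log lam = EX / Real.log lam := by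
  obtain ⟨K, hK⟩ := sandwich f ξ lam hξ hlam hss X hX
  have hL : 0 < Real.log lam := Real.log_pos hlam
  set C : ℕ → ℝ := fun n => Real.log ((covN X (fun a b => dist a b) (ξ / lam ^ n) : ℕ) : ℝ) with hC
  have hup : Tendsto (fun n : ℕ => Real.log K / (n:ℝ) +
      Real.log ((covN X (dPlusn f n) ξ : ℕ) : ℝ) / (n : ℝ)) atTop (𝓝 EpX) := by
    simpa using (tendsto_const_div_atTop_nhds_zero_nat (Real.log K)).add hEpX
  have hCK : ∀ n, C n ≤ Real.log K + Real.log ((covN X (dPlusn f n) ξ : ℕ) : ℝ) := fun n =>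
    (log_nat_mono (hK n).2.2).trans (log_nat_mul _ _)
  have hF : Tendsto (fun n : ℕ =>
        Real.log ((covN X (dFn f n) ξ : ℕ) : ℝ) / (n : ℝ)) atTop (𝓝 EpX) := by
    refine tendsto_of_tendsto_of_tendsto_of_le_of_le hEpX hup (fun n => ?_) (fun n => ?_)
    · exact div_le_div_of_nonneg_right (log_nat_mono (hK n).1) (Nat.cast_nonneg n)
    · simp only
      rw [← add_div]
      exact div_le_div_of_nonneg_right ((log_nat_mono (hK n).2.1).trans (hCK n))
        (Nat.cast_nonneg n)
  have hCt : Tendsto (fun n : ℕ => C n / (n : ℝ)) atTop (𝓝 EpX) := by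
    refine tendsto_of_tendsto_of_tendsto_of_le_of_le hF hup (fun n => ?_) (fun n => ?_)
    · exact div_le_div_of_nonneg_right (log_nat_mono (hK n).2.1) (Nat.cast_nonneg n)
    · simp only
      rw [← add_div]
      exact div_le_div_of_nonneg_right (hCK n) (Nat.cast_nonneg n)
  refine ⟨?_, by rw [tendsto_nhds_unique hF hEX]⟩
  have hlin : ∀ a : ℝ, Tendsto (fun n : ℕ => (n : ℝ) / (n * Real.log lam + a)) atTop
      (𝓝 (1 / Real.log lam)) := by
    intro a
    have h1 : Tendsto (fun n : ℕ => Real.log lam + a / (n:ℝ)) atTop (𝓝 (Real.log lam)) := by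
      simpa using (tendsto_const_div_atTop_nhds_zero_nat a).const_add (Real.log lam)
    have h2 := (tendsto_const_nhds (x := (1:ℝ))).div h1 hL.ne'
    refine h2.congr' ?_
    filter_upwards [eventually_gt_atTop 0] with n hn
    have : (0:ℝ) < n := by exact_mod_cast hn
    simp only [Pi.div_apply]
    have e : (n:ℝ) * Real.log lam + a = n * (Real.log lam + a / n) := by field_simp
    rw [e]
    rw [div_mul_eq_div_div, div_self this.ne']
  have hq : ∀ a : ℝ, Tendsto (fun n : ℕ => C n / (n * Real.log lam + a)) atTop
      (𝓝 (EpX / Real.log lam)) := by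
    intro a
    have := hCt.mul (hlin a)
    rw [mul_one_div] at this
    refine this.congr' ?_
    filter_upwards [eventually_gt_atTop 0] with n hn
    have : (0:ℝ) < n := by exact_mod_cast hn
    rw [div_mul_div_cancel₀ this.ne']
  have hlow := hq (Real.log lam - Real.log ξ)
  have hhigh := (hq (- Real.log lam - Real.log ξ)).comp (tendsto_add_atTop_nat 1)
  have hlogbot : Tendsto Real.log (𝓝[>] (0:ℝ)) atBot := Real.tendsto_log_nhdsGT_zero
  have htop : Tendsto (fun ε : ℝ => (Real.log ξ - Real.log ε) / Real.log lam) (𝓝[>] (0:ℝ))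
      atTop := by
    apply Tendsto.atTop_div_const hL
    exact tendsto_atTop_add_const_left _ _ (tendsto_neg_atBot_atTop.comp hlogbot)
  have hfl : Tendsto (fun ε : ℝ => ⌊(Real.log ξ - Real.log ε) / Real.log lam⌋₊) (𝓝[>] (0:ℝ))
      atTop := tendsto_nat_floor_atTop.comp htop
  have hmem : ∀ᶠ ε : ℝ in 𝓝[>] (0:ℝ), 0 < ε := eventually_mem_nhdsWithin
  have hbig : ∀ᶠ n : ℕ in atTop, 0 < (n:ℝ) * Real.log lam - Real.log ξ := by
    have : Tendsto (fun n : ℕ => (n:ℝ) * Real.log lam - Real.log ξ) atTop atTop :=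
      tendsto_atTop_add_const_right _ _
        (tendsto_natCast_atTop_atTop.atTop_mul_const hL)
    exact this.eventually (eventually_gt_atTop 0)
  have main : ∀ᶠ ε : ℝ in 𝓝[>] (0:ℝ), 
      C ⌊(Real.log ξ - Real.log ε) / Real.log lam⌋₊ /
        ((⌊(Real.log ξ - Real.log ε) / Real.log lam⌋₊ : ℕ) * Real.log lam
          + (Real.log lam - Real.log ξ)) ≤
      Real.log ((covN X (fun a b => dist a b) ε : ℕ) : ℝ) / (- Real.log ε) ∧
      Real.log ((covN X (fun a b => dist a b) ε : ℕ) : ℝ) / (- Real.log ε) ≤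
      C (⌊(Real.log ξ - Real.log ε) / Real.log lam⌋₊ + 1) /
        (((⌊(Real.log ξ - Real.log ε) / Real.log lam⌋₊ + 1 : ℕ) : ℝ) * Real.log lam
          + (- Real.log lam - Real.log ξ)) := by
    filter_upwards [hmem, hfl.eventually hbig, htop.eventually (eventually_ge_atTop 0)]
      with ε hε hb ht
    set n := ⌊(Real.log ξ - Real.log ε) / Real.log lam⌋₊ with hn
    have f1 : (n:ℝ) * Real.log lam ≤ Real.log ξ - Real.log ε :=
      (le_div_iff₀ hL).1 (Nat.floor_le ht)
    have f2 : Real.log ξ - Real.log ε < ((n:ℝ) + 1) * Real.log lam :=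
      (div_lt_iff₀ hL).1 (Nat.lt_floor_add_one _)
    have hpos : ∀ n : ℕ, 0 < lam ^ n := fun n => by positivity
    have hle : ∀ m : ℕ, Real.log (ξ / lam ^ m) = Real.log ξ - m * Real.log lam := fun m => by
      rw [Real.log_div hξ.ne' (hpos m).ne', Real.log_pow]
    have g1 : ε ≤ ξ / lam ^ n := by
      rw [← Real.log_le_log_iff hε (div_pos hξ (hpos n)), hle]; linarith
    have g2 : ξ / lam ^ (n+1) ≤ ε := by
      rw [← Real.log_le_log_iff (div_pos hξ (hpos _)) hε, hle]; push_cast; linarith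
    obtain ⟨m, hm⟩ := exists_cov X ε hε
    obtain ⟨m', hm'⟩ := exists_cov X (ξ / lam ^ (n+1)) (div_pos hξ (hpos _))
    have c1 : C n ≤ Real.log ((covN X (fun a b => dist a b) ε : ℕ) : ℝ) :=
      log_nat_mono (covN_le ((covN_spec hm).mono fun A hA => hA.trans_le g1))
    have c2 : Real.log ((covN X (fun a b => dist a b) ε : ℕ) : ℝ) ≤ C (n+1) :=
      log_nat_mono (covN_le ((covN_spec hm').mono fun A hA => hA.trans_le g2))
    constructor
    · apply div_le_div₀ (Real.log_natCast_nonneg _) c1 (by linarith) (by linarith)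
    · apply div_le_div₀ (Real.log_natCast_nonneg _) c2 
      · push_cast; linarith
      · push_cast; linarith
  exact tendsto_of_tendsto_of_tendsto_of_le_of_le' (hlow.comp hfl) (hhigh.comp hfl)
    (main.mono fun _ h => h.1) (main.mono fun _ h => h.2)

end dyn

theorem stmt_13 {M : Type*} [MetricSpace M] [CompactSpace M]
    (f : Equiv.Perm M) (hf : Continuous f) (hf' : Continuous f.symm)
    (ξ lam : ℝ) (hξ : 0 < ξ) (hlam : 1 < lam)
    (hexp : ∀ x y : M, x ≠ y → ∃ n : ℤ, ξ < dist ((f ^ n) x) ((f ^ n) y))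
    (hss : ∀ p q : M, dist p q ≤ ξ →
      max (dist (f p) (f q)) (dist (f.symm p) (f.symm q)) = lam * dist p q)
    (X : Set M)
    (hX : Tendsto (fun n : ℕ => Metric.diam ((fun z => (f.symm ^ n) z) '' X)) atTop (𝓝 0))
    (EpX EX : ℝ)
    (hEpX : Tendsto (fun n : ℕ =>
        Real.log ((covN X (dPlusn f n) ξ : ℕ) : ℝ) / (n : ℝ)) atTop (𝓝 EpX))
    (hEX : Tendsto (fun n : ℕ =>
        Real.log ((covN X (dFn f n) ξ : ℕ) : ℝ) / (n : ℝ)) atTop (𝓝 EX))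
    (Y : Set M)
    (hY : Tendsto (fun n : ℕ => Metric.diam ((fun z => (f ^ n) z) '' Y)) atTop (𝓝 0))
    (EmY EY : ℝ)
    (hEmY : Tendsto (fun n : ℕ =>
        Real.log ((covN Y (dMinusn f n) ξ : ℕ) : ℝ) / (n : ℝ)) atTop (𝓝 EmY))
    (hEY : Tendsto (fun n : ℕ =>
        Real.log ((covN Y (dFn f n) ξ : ℕ) : ℝ) / (n : ℝ)) atTop (𝓝 EY)) :
    (Tendsto (fun ε : ℝ =>
        Real.log ((covN X (fun a b => dist a b) ε : ℕ) : ℝ) / (- Real.log ε))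
      (𝓝[>] (0 : ℝ)) (𝓝 (EpX / Real.log lam)) ∧
      EpX / Real.log lam = EX / Real.log lam) ∧
    (Tendsto (fun ε : ℝ =>
        Real.log ((covN Y (fun a b => dist a b) ε : ℕ) : ℝ) / (- Real.log ε))
      (𝓝[>] (0 : ℝ)) (𝓝 (EmY / Real.log lam)) ∧
      EmY / Real.log lam = EY / Real.log lam) := by
  refine ⟨half f ξ lam hξ hlam hss X hX EpX EX hEpX hEX, ?_⟩
  have hsymm : ∀ n : ℕ, dFn f.symm n = dFn f n := by
    intro n
    funext x y
    unfold dFn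
    congr 1
    ext r
    have e : ∀ k : ℤ, f.symm ^ k = f ^ (-k) := fun k => by
      rw [zpow_neg, ← inv_zpow]; rfl
    constructor
    · rintro ⟨k, hk, rfl⟩
      exact ⟨-k, by simpa using hk, by rw [e]⟩
    · rintro ⟨k, hk, rfl⟩
      exact ⟨-k, by simpa using hk, by rw [e, neg_neg]⟩
  refine half f.symm ξ lam hξ hlam (fun p q h => ?_) Y ?_ EmY EY hEmY ?_
  · rw [Equiv.symm_symm, max_comm]; exact hss p q h
  · simpa only [Equiv.symm_symm] using hY
  · simpa only [hsymm] using hEY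
end

section
/- Let f be an expansive homeomorphism with canonical coordinates of a compact metric space (M,d), where 3ξ is an expansivity constant and d is self-similar for f with expanding factor λ > 1 and constant ξ. If r < ξ and C = C_r(p) is a product box, then ent⁺(C) = ent⁺(P^u) for every unstable plaque P^u of C and ent⁻(C) = ent⁻(P^s) for every stable plaque P^s of C. -/
open Filter Topology

def Ws {M : Type*} [MetricSpace M] (f : Equiv.Perm M) (eps : ℝ) (x : M) : Set M :=
  {y | ∀ n : ℕ, dist ((f ^ n) x) ((f ^ n) y) ≤ eps}

def Wu {M : Type*} [MetricSpace M] (f : Equiv.Perm M) (eps : ℝ) (x : M) : Set M :=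
  {y | ∀ n : ℕ, dist ((f.symm ^ n) x) ((f.symm ^ n) y) ≤ eps}

lemma aux_pow_succ {M : Type*} (f : Equiv.Perm M) (k : ℕ) (x : M) :
    f ((f ^ k) x) = (f ^ (k+1)) x := by
  rw [pow_succ']; rfl

lemma aux_symm_pow_succ {M : Type*} (f : Equiv.Perm M) (k : ℕ) (x : M) :
    f.symm ((f ^ (k+1)) x) = (f ^ k) x := by
  rw [← aux_pow_succ]; simp

lemma aux_symm_pow_add {M : Type*} (f : Equiv.Perm M) (k j : ℕ) (x : M) :
    (f.symm ^ j) ((f ^ (k+j)) x) = (f ^ k) x := by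
  induction j with
  | zero => simp
  | succ j ih =>
    rw [pow_succ, Equiv.Perm.mul_apply, ← add_assoc, aux_symm_pow_succ, ih]

lemma aux_conv (a : ℕ → ℝ) (ξ lam : ℝ) (n : ℕ) (hlam : 1 < lam) (ha : ∀ k ≤ n, a k ≤ ξ)
    (h : ∀ k, k + 2 ≤ n → max (a (k+2)) (a k) = lam * a (k+1)) :
    ∀ m k, m ≤ k → k + m ≤ n → a k * lam ^ m ≤ ξ := by
  intro m
  induction m with
  | zero => intro k _ hk; simpa using ha k (by omega)
  | succ m ih =>
    intro k hk hkn
    obtain ⟨k, rfl⟩ : ∃ j, k = j + 1 := ⟨k - 1, by omega⟩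
    have h1 := ih (k+2) (by omega) (by omega)
    have h2 := ih k (by omega) (by omega)
    have h3 := h k (by omega)
    have : a (k+1) * lam ^ (m+1) = max (a (k+2)) (a k) * lam ^ m := by rw [h3]; ring
    rw [this]
    rcases max_choice (a (k+2)) (a k) with h4 | h4 <;> rw [h4] <;> assumption

lemma aux_orbit {M : Type*} [MetricSpace M] (f : Equiv.Perm M) (ξ lam : ℝ) (hlam : 1 < lam)
    (hss : ∀ p q : M, dist p q ≤ ξ →
      max (dist (f p) (f q)) (dist (f.symm p) (f.symm q)) = lam * dist p q)
    (x y : M) (n : ℕ) (h : ∀ k ≤ n, dist ((f ^ k) x) ((f ^ k) y) ≤ ξ) (m k : ℕ)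
    (hmk : m ≤ k) (hkn : k + m ≤ n) : dist ((f ^ k) x) ((f ^ k) y) * lam ^ m ≤ ξ := by
  refine aux_conv (fun k => dist ((f ^ k) x) ((f ^ k) y)) ξ lam n hlam h ?_ m k hmk hkn
  intro j hj
  have := hss _ _ (h (j+1) (by omega))
  simpa only [aux_pow_succ, aux_symm_pow_succ] using this

lemma aux_covN_le_s14 {M : Type*} {ι : Type*} [Fintype ι] (X : Set M) (ρ : M → M → ℝ) (ε : ℝ)
    (U : ι → Set M) (hX : X ⊆ ⋃ i, U i) (hU : ∀ i, rdiam ρ (U i) < ε) :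
    covN X ρ ε ≤ Fintype.card ι := by
  refine Nat.sInf_le ⟨fun i => U ((Fintype.equivFin ι).symm i), ?_, fun i => hU _⟩
  intro x hx
  obtain ⟨i, hi⟩ := Set.mem_iUnion.1 (hX hx)
  exact Set.mem_iUnion.2 ⟨Fintype.equivFin ι i, by simpa using hi⟩

lemma aux_rdiam_lt_s14 {M : Type*} [MetricSpace M] (f : Equiv.Perm M) (n : ℕ) (ξ : ℝ) (hξ : 0 < ξ)
    (A : Set M) (h : ∀ a ∈ A, ∀ b ∈ A, ∀ k ≤ n, dist ((f ^ k) a) ((f ^ k) b) ≤ ξ / 2) :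
    rdiam (dPlusn f n) A < ξ := by
  refine lt_of_le_of_lt (b := ξ / 2) (Real.sSup_le ?_ (by linarith)) (by linarith)
  rintro _ ⟨a, ha, b, hb, rfl⟩
  refine Real.sSup_le ?_ (by linarith)
  rintro _ ⟨k, hk, rfl⟩
  exact h a ha b hb k hk

lemma aux_of_rdiam_lt {M : Type*} [MetricSpace M] [CompactSpace M] (f : Equiv.Perm M) (n : ℕ)
    (ξ : ℝ) (A : Set M) (h : rdiam (dPlusn f n) A < ξ) (a : M) (ha : a ∈ A) (b : M) (hb : b ∈ A)
    (k : ℕ) (hk : k ≤ n) : dist ((f ^ k) a) ((f ^ k) b) ≤ ξ := by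
  have hD : ∀ x y : M, dist x y ≤ Metric.diam (Set.univ : Set M) := fun x y =>
    Metric.dist_le_diam_of_mem isCompact_univ.isBounded trivial trivial
  have h1 : dist ((f ^ k) a) ((f ^ k) b) ≤ dPlusn f n a b := by
    refine le_csSup ⟨Metric.diam (Set.univ : Set M), ?_⟩ ⟨k, hk, rfl⟩
    rintro _ ⟨j, _, rfl⟩
    exact hD _ _
  have h2 : dPlusn f n a b ≤ rdiam (dPlusn f n) A := by
    refine le_csSup ⟨Metric.diam (Set.univ : Set M), ?_⟩ ⟨a, ha, b, hb, rfl⟩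
    rintro _ ⟨x, _, y, _, rfl⟩
    refine Real.sSup_le ?_ Metric.diam_nonneg
    rintro _ ⟨j, _, rfl⟩
    exact hD _ _
  linarith

lemma aux_continuous_pow {M : Type*} [TopologicalSpace M] (f : Equiv.Perm M) (hf : Continuous f)
    (k : ℕ) : Continuous (f ^ k : Equiv.Perm M) := by
  rw [Equiv.Perm.coe_pow]
  exact hf.iterate k

lemma aux_cover {M : Type*} [MetricSpace M] [CompactSpace M] (f : Equiv.Perm M)
    (hf : Continuous f) (hf' : Continuous f.symm) (ξ : ℝ) (hξ : 0 < ξ) (m : ℕ) :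
    ∃ (t : Finset M) (V : t → Set M), (∀ x, ∃ i, x ∈ V i) ∧ ∀ i, ∀ a ∈ V i, ∀ b ∈ V i, ∀ k ≤ m,
      dist ((f ^ k) a) ((f ^ k) b) ≤ ξ / 2 ∧
      dist ((f.symm ^ k) a) ((f.symm ^ k) b) ≤ ξ / 2 := by
  let V : M → Set M := fun x => ⋂ k ∈ Finset.range (m+1),
    ({y | dist ((f ^ k) x) ((f ^ k) y) < ξ / 4} ∩
     {y | dist ((f.symm ^ k) x) ((f.symm ^ k) y) < ξ / 4})
  have hV : ∀ x ∈ (Set.univ : Set M), V x ∈ 𝓝 x := by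
    intro x _
    refine (Filter.biInter_finset_mem _).2 fun k _ => Filter.inter_mem ?_ ?_
    · refine (isOpen_lt (continuous_const.dist (aux_continuous_pow f hf k))
        continuous_const).mem_nhds ?_
      simp; positivity
    · refine (isOpen_lt (continuous_const.dist (aux_continuous_pow f.symm hf' k))
        continuous_const).mem_nhds ?_
      simp; positivity
  obtain ⟨t, _, ht⟩ := isCompact_univ.elim_nhds_subcover V hV
  refine ⟨t, fun i => V i, fun x => ?_, ?_⟩
  · obtain ⟨i, hi, hx⟩ := Set.mem_iUnion₂.1 (ht (Set.mem_univ x))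
    exact ⟨⟨i, hi⟩, hx⟩
  · intro i a ha b hb k hk
    have h1 := Set.mem_iInter₂.1 ha k (Finset.mem_range.2 (by omega))
    have h2 := Set.mem_iInter₂.1 hb k (Finset.mem_range.2 (by omega))
    have h11 : dist ((f ^ k) i) ((f ^ k) a) < ξ / 4 := h1.1
    have h12 : dist ((f.symm ^ k) i) ((f.symm ^ k) a) < ξ / 4 := h1.2
    have h21 : dist ((f ^ k) i) ((f ^ k) b) < ξ / 4 := h2.1
    have h22 : dist ((f.symm ^ k) i) ((f.symm ^ k) b) < ξ / 4 := h2.2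
    constructor
    · linarith [dist_triangle_left ((f ^ k) a) ((f ^ k) b) ((f ^ k) i)]
    · linarith [dist_triangle_left ((f.symm ^ k) a) ((f.symm ^ k) b) ((f.symm ^ k) i)]

lemma aux_exists_cover {M : Type*} [MetricSpace M] [CompactSpace M] (f : Equiv.Perm M)
    (hf : Continuous f) (hf' : Continuous f.symm) (ξ : ℝ) (hξ : 0 < ξ) (n : ℕ) (X : Set M) :
    ∃ U : Fin (covN X (dPlusn f n) ξ) → Set M, X ⊆ (⋃ i, U i) ∧
      ∀ i, rdiam (dPlusn f n) (U i) < ξ := by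
  obtain ⟨t, V, hV, hd⟩ := aux_cover f hf hf' ξ hξ n
  have : {n' : ℕ | ∃ U : Fin n' → Set M, X ⊆ (⋃ i, U i) ∧
      ∀ i, rdiam (dPlusn f n) (U i) < ξ}.Nonempty := by
    refine ⟨Fintype.card t, fun i => V ((Fintype.equivFin t).symm i), ?_, fun i => ?_⟩
    · intro x _
      obtain ⟨i, hi⟩ := hV x
      exact Set.mem_iUnion.2 ⟨Fintype.equivFin t i, by simpa using hi⟩
    · exact aux_rdiam_lt_s14 f n ξ hξ _ fun a ha b hb k hk => (hd _ a ha b hb k hk).1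
  exact Nat.sInf_mem this

lemma aux_bound {M : Type*} [MetricSpace M] [CompactSpace M] (f : Equiv.Perm M)
    (hf : Continuous f) (hf' : Continuous f.symm) (ξ lam : ℝ) (hξ : 0 < ξ) (hlam : 1 < lam)
    (hss : ∀ p q : M, dist p q ≤ ξ →
      max (dist (f p) (f q)) (dist (f.symm p) (f.symm q)) = lam * dist p q)
    (P C : Set M)
    (hC : ∀ z ∈ C, ∃ z₀ ∈ P, ∀ k : ℕ, dist ((f ^ k) z) ((f ^ k) z₀) * lam ^ k ≤ 4 * ξ) :
    ∃ K : ℕ, ∀ n, covN C (dPlusn f n) ξ ≤ K * covN P (dPlusn f n) ξ := by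
  obtain ⟨m, hm⟩ := pow_unbounded_of_one_lt 18 hlam
  obtain ⟨t, V, hV, hd⟩ := aux_cover f hf hf' ξ hξ m
  refine ⟨Fintype.card t * Fintype.card t, fun n => ?_⟩
  obtain ⟨U, hPU, hU⟩ := aux_exists_cover f hf hf' ξ hξ n P
  let N := covN P (dPlusn f n) ξ
  let A : (t × t) × Fin N → Set M := fun i =>
    {z | (∃ z₀ ∈ U i.2, ∀ k : ℕ, dist ((f ^ k) z) ((f ^ k) z₀) * lam ^ k ≤ 4 * ξ) ∧
      z ∈ V i.1.1 ∧ (f ^ n) z ∈ V i.1.2}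
  have key := aux_covN_le_s14 C (dPlusn f n) ξ A ?_ ?_
  · simpa [N] using key
  · intro z hz
    obtain ⟨z₀, hz₀, h⟩ := hC z hz
    obtain ⟨i, hi⟩ := Set.mem_iUnion.1 (hPU hz₀)
    obtain ⟨j, hj⟩ := hV z
    obtain ⟨l, hl⟩ := hV ((f ^ n) z)
    exact Set.mem_iUnion.2 ⟨((j, l), i), ⟨z₀, hi, h⟩, hj, hl⟩
  · rintro ⟨⟨j, l⟩, i⟩
    refine aux_rdiam_lt_s14 f n ξ hξ _ ?_
    rintro a ⟨⟨a₀, ha₀, ha⟩, haj, hal⟩ b ⟨⟨b₀, hb₀, hb⟩, hbj, hbl⟩ k hk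
    rcases le_or_gt k m with hkm | hkm
    · exact (hd j a haj b hbj k hkm).1
    rcases le_or_gt n (k + m) with hnm | hnm
    · have := (hd l _ hal _ hbl (n - k) (by omega)).2
      obtain ⟨q, rfl⟩ := Nat.exists_eq_add_of_le hk
      simpa [aux_symm_pow_add] using this
    · have h0 := aux_orbit f ξ lam hlam hss a₀ b₀ n
        (fun k hk => aux_of_rdiam_lt f n ξ _ (hU i) a₀ ha₀ b₀ hb₀ k hk) m k hkm.le hnm.le
      have hp : lam ^ m ≤ lam ^ k := pow_le_pow_right₀ hlam.le hkm.le
      have h1 := ha k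
      have h2 := hb k
      have h1' := mul_le_mul_of_nonneg_left hp (dist_nonneg (x := (f ^ k) a) (y := (f ^ k) a₀))
      have h2' := mul_le_mul_of_nonneg_left hp (dist_nonneg (x := (f ^ k) b) (y := (f ^ k) b₀))
      have h3 := dist_triangle4_right ((f ^ k) a) ((f ^ k) b) ((f ^ k) a₀) ((f ^ k) b₀)
      have hL : 0 < lam ^ m := by linarith
      have h4 := mul_le_mul_of_nonneg_right h3 hL.le
      have h5 : dist ((f ^ k) a) ((f ^ k) b) * lam ^ m ≤ 9 * ξ := by nlinarith
      have h6 := mul_le_mul_of_nonneg_left hm.le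
        (dist_nonneg (x := (f ^ k) a) (y := (f ^ k) b))
      linarith

lemma aux_core {M : Type*} [MetricSpace M] [CompactSpace M] (f : Equiv.Perm M)
    (hf : Continuous f) (hf' : Continuous f.symm) (ξ lam : ℝ) (hξ : 0 < ξ) (hlam : 1 < lam)
    (hss : ∀ p q : M, dist p q ≤ ξ →
      max (dist (f p) (f q)) (dist (f.symm p) (f.symm q)) = lam * dist p q)
    (P C : Set M) (hPC : P ⊆ C) (hP : P.Nonempty)
    (hC : ∀ z ∈ C, ∃ z₀ ∈ P, ∀ k : ℕ, dist ((f ^ k) z) ((f ^ k) z₀) * lam ^ k ≤ 4 * ξ) (E : ℝ) :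
    Tendsto (fun n : ℕ => Real.log ((covN C (dPlusn f n) ξ : ℕ) : ℝ) / (n : ℝ)) atTop (𝓝 E) ↔
    Tendsto (fun n : ℕ => Real.log ((covN P (dPlusn f n) ξ : ℕ) : ℝ) / (n : ℝ)) atTop (𝓝 E) := by
  obtain ⟨K, hK⟩ := aux_bound f hf hf' ξ lam hξ hlam hss P C hC
  have hpos : ∀ n, 0 < covN P (dPlusn f n) ξ := by
    intro n
    obtain ⟨U, hPU, _⟩ := aux_exists_cover f hf hf' ξ hξ n P
    obtain ⟨x, hx⟩ := hP
    obtain ⟨i, _⟩ := Set.mem_iUnion.1 (hPU hx)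
    exact i.pos
  have hle : ∀ n, covN P (dPlusn f n) ξ ≤ covN C (dPlusn f n) ξ := by
    intro n
    obtain ⟨U, hU, hd⟩ := aux_exists_cover f hf hf' ξ hξ n C
    exact Nat.sInf_le ⟨U, hPC.trans hU, hd⟩
  have hK0 : 0 < K := by
    rcases Nat.eq_zero_or_pos K with h | h
    · have h1 := hK 0
      have h2 := hpos 0
      have h3 := hle 0
      rw [h, zero_mul] at h1
      omega
    · exact h
  have hdiff : Tendsto (fun n : ℕ => Real.log ((covN C (dPlusn f n) ξ : ℕ) : ℝ) / (n : ℝ) -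
      Real.log ((covN P (dPlusn f n) ξ : ℕ) : ℝ) / (n : ℝ)) atTop (𝓝 0) := by
    refine squeeze_zero (fun n => ?_) (fun n => ?_)
      (tendsto_const_div_atTop_nhds_zero_nat (Real.log K))
    · have h1 : (0:ℝ) < covN P (dPlusn f n) ξ := by exact_mod_cast hpos n
      have h2 : (covN P (dPlusn f n) ξ : ℝ) ≤ covN C (dPlusn f n) ξ := by exact_mod_cast hle n
      rw [← sub_div]
      exact div_nonneg (sub_nonneg.2 (Real.log_le_log h1 h2)) (Nat.cast_nonneg n)
    · have h1 : (0:ℝ) < covN P (dPlusn f n) ξ := by exact_mod_cast hpos n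
      have h2 : (covN P (dPlusn f n) ξ : ℝ) ≤ covN C (dPlusn f n) ξ := by exact_mod_cast hle n
      have h3 : (covN C (dPlusn f n) ξ : ℝ) ≤ K * covN P (dPlusn f n) ξ := by exact_mod_cast hK n
      have hK' : (0:ℝ) < K := by exact_mod_cast hK0
      have h4 := Real.log_le_log (h1.trans_le h2) h3
      rw [Real.log_mul hK'.ne' h1.ne'] at h4
      rw [← sub_div]
      exact div_le_div_of_nonneg_right (by linarith) (Nat.cast_nonneg n)
  constructor
  · intro h
    simpa using h.sub hdiff
  · intro h
    simpa using h.add hdiff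

lemma aux_main {M : Type*} [MetricSpace M] [CompactSpace M] (f : Equiv.Perm M)
    (hf : Continuous f) (hf' : Continuous f.symm) (ξ lam : ℝ) (hξ : 0 < ξ) (hlam : 1 < lam)
    (hss : ∀ p q : M, dist p q ≤ ξ →
      max (dist (f p) (f q)) (dist (f.symm p) (f.symm q)) = lam * dist p q)
    (p : M) (r : ℝ) (hr0 : 0 < r) (hrξ : r < ξ) (br : M → M → M)
    (hbr : ∀ x ∈ Ws f r p, ∀ y ∈ Wu f r p, br x y ∈ Ws f ξ x)
    (x₀ : M) (hx₀ : x₀ ∈ Ws f r p) (C : Set M)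
    (hCd : C = {z | ∃ x ∈ Ws f r p, ∃ y ∈ Wu f r p, z = br x y}) (E : ℝ) :
    Tendsto (fun n : ℕ => Real.log ((covN C (dPlusn f n) ξ : ℕ) : ℝ) / (n : ℝ)) atTop (𝓝 E) ↔
    Tendsto (fun n : ℕ => Real.log ((covN {z | ∃ y ∈ Wu f r p, z = br x₀ y}
      (dPlusn f n) ξ : ℕ) : ℝ) / (n : ℝ)) atTop (𝓝 E) := by
  subst hCd
  refine aux_core f hf hf' ξ lam hξ hlam hss _ _ ?_ ?_ ?_ E
  · rintro _ ⟨y, hy, rfl⟩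
    exact ⟨x₀, hx₀, y, hy, rfl⟩
  · exact ⟨br x₀ p, p, fun n => by simpa using hr0.le, rfl⟩
  · rintro _ ⟨x, hx, y, hy, rfl⟩
    refine ⟨br x₀ y, ⟨y, hy, rfl⟩, fun k => ?_⟩
    have hs : ∀ u v : M, (∀ n : ℕ, dist ((f ^ n) u) ((f ^ n) v) ≤ ξ) →
        dist ((f ^ k) u) ((f ^ k) v) * lam ^ k ≤ ξ := fun u v h =>
      aux_orbit f ξ lam hlam hss u v (k + k) (fun j _ => h j) k k le_rfl le_rfl
    have h1 := hs _ _ (hbr x hx y hy)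
    have h2 := hs _ _ (hbr x₀ hx₀ y hy)
    have h3 := hs p x fun n => (hx n).trans hrξ.le
    have h4 := hs p x₀ fun n => (hx₀ n).trans hrξ.le
    have hL : 0 ≤ lam ^ k := by positivity
    have t1 := dist_triangle_left ((f ^ k) (br x y)) ((f ^ k) (br x₀ y)) ((f ^ k) x)
    have t2 := dist_triangle ((f ^ k) x) ((f ^ k) x₀) ((f ^ k) (br x₀ y))
    have t3 := dist_triangle_left ((f ^ k) x) ((f ^ k) x₀) ((f ^ k) p)
    have t4 := mul_le_mul_of_nonneg_right (t1.trans (add_le_add_right (t2.trans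
      (add_le_add_left t3 _)) _)) hL
    linarith

theorem stmt_14 {M : Type*} [MetricSpace M] [CompactSpace M]
    (f : Equiv.Perm M) (hf : Continuous f) (hf' : Continuous f.symm)
    (ξ lam : ℝ) (hξ : 0 < ξ) (hlam : 1 < lam)
    (hexp : ∀ x y : M, x ≠ y → ∃ n : ℤ, 3 * ξ < dist ((f ^ n) x) ((f ^ n) y))
    (hss : ∀ p q : M, dist p q ≤ ξ →
      max (dist (f p) (f q)) (dist (f.symm p) (f.symm q)) = lam * dist p q)
    (hcc : ∀ ε > (0 : ℝ), ∃ δ > (0 : ℝ), ∀ x y : M, dist x y < δ → (Ws f ε x ∩ Wu f ε y).Nonempty)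
    (p : M) (r : ℝ) (hr0 : 0 < r) (hrξ : r < ξ)
    (br : M → M → M)
    (hbr : ∀ x ∈ Ws f r p, ∀ y ∈ Wu f r p, br x y ∈ Ws f ξ x ∩ Wu f ξ y) :
    (∀ x₀ ∈ Ws f r p, ∀ E : ℝ,
      Tendsto (fun n : ℕ =>
          Real.log ((covN {z | ∃ x ∈ Ws f r p, ∃ y ∈ Wu f r p, z = br x y}
            (dPlusn f n) ξ : ℕ) : ℝ) / (n : ℝ)) atTop (𝓝 E) ↔
      Tendsto (fun n : ℕ =>
          Real.log ((covN {z | ∃ y ∈ Wu f r p, z = br x₀ y}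
            (dPlusn f n) ξ : ℕ) : ℝ) / (n : ℝ)) atTop (𝓝 E)) ∧
    (∀ y₀ ∈ Wu f r p, ∀ E : ℝ,
      Tendsto (fun n : ℕ =>
          Real.log ((covN {z | ∃ x ∈ Ws f r p, ∃ y ∈ Wu f r p, z = br x y}
            (dMinusn f n) ξ : ℕ) : ℝ) / (n : ℝ)) atTop (𝓝 E) ↔
      Tendsto (fun n : ℕ =>
          Real.log ((covN {z | ∃ x ∈ Ws f r p, z = br x y₀}
            (dMinusn f n) ξ : ℕ) : ℝ) / (n : ℝ)) atTop (𝓝 E)) := by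
  constructor
  · intro x₀ hx₀ E
    exact aux_main f hf hf' ξ lam hξ hlam hss p r hr0 hrξ br
      (fun x hx y hy => (hbr x hx y hy).1) x₀ hx₀ _ rfl E
  · intro y₀ hy₀ E
    refine aux_main f.symm hf' hf ξ lam hξ hlam
      (fun a b h => by rw [max_comm]; exact hss a b h) p r hr0 hrξ (fun y x => br x y)
      (fun y hy x hx => (hbr x hx y hy).2) y₀ hy₀ _ ?_ E
    ext z
    constructor
    · rintro ⟨x, hx, y, hy, h⟩
      exact ⟨y, hy, x, hx, h⟩
    · rintro ⟨y, hy, x, hx, h⟩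
      exact ⟨x, hx, y, hy, h⟩
end
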